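/- arXiv:2306.14863 — 5 statements merged into one kernel-verified Lean document; each statement's English description precedes it below -/
import Mathlib

section
/- There exist a natural number n and a finite set R of elements of the free group FreeGroup (Fin n) such that membership in the normal closure of R is not a computable predicate; that is, there is a finitely presented group with unsolvable word problem (Novikov 1955, Boone 1959). -/
/-!
The configurations of a Turing machine are coded by points of `ℤ × ℤ`, one coordinate holding the
state and the left half-tape and the other the right half-tape, as digits in a fixed base. A step
of the machine then becomes the application of a rule `src i v ↦ tgt i v` with `src i` and `tgt i`
injective affine maps. Since the machine is deterministic, a code is equivalent to the code `0` of
a halted machine exactly when the machine halts.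

The rules are implemented in a group containing the lamplighter group `ℤ/2 ≀ ℤ²`, whose lamps are
indexed by the points of the plane. An injective affine map induces an embedding of the lamplighter
group, so for each rule there is an HNN extension whose stable letter `r i` conjugates the lamp at
`src i v` to the lamp at `tgt i v`; finitely many relations suffice to say so for all `v`. By
Britton's lemma, the subgroup generated by the `r i` and the lamps equivalent to `v₀` contains no
other lamp. A further generator `k` commuting with exactly this subgroup gives commutators of `k`
with lamps which are trivial exactly when the lamp is equivalent to `v₀`.
-/

open Function Relation

namespace NovikovBoone

universe u v

/-! ### HNN extensions -/

section HNN

open HNNExtension HNNExtension.NormalWord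

variable {G : Type u} [Group G] {A B : Subgroup G} {φ : A ≃* B} {H : Subgroup G}

theorem mem_iff_toSubgroupEquiv_mem (hφ : ∀ a : A, (a : G) ∈ H ↔ (φ a : G) ∈ H) (u : ℤˣ)
    (g : toSubgroup A B u) : (g : G) ∈ H ↔ (toSubgroupEquiv φ u g : G) ∈ H := by
  rcases Int.units_eq_one_or u with rfl | rfl
  · exact hφ g
  · obtain ⟨a, rfl⟩ := φ.surjective g
    change (φ a : G) ∈ H ↔ (φ.symm (φ a) : G) ∈ H
    rw [φ.symm_apply_apply, hφ]

theorem units_pow_t_mul_of (u : ℤˣ) (g : toSubgroup A B u) :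
    (t ^ (u : ℤ) * of (g : G) : HNNExtension G A B φ) =
      of (toSubgroupEquiv φ u g : G) * t ^ (u : ℤ) := by
  rcases Int.units_eq_one_or u with rfl | rfl
  · rw [Units.val_one, zpow_one]
    exact t_mul_of g
  · rw [Units.val_neg, Units.val_one, zpow_neg_one]
    exact inv_t_mul_of g

/-- Elements of an HNN extension of `G` represented by a reduced word in the stable letter and
elements of the subgroup `H` of `G`. -/
def HasReducedWordOver (H : Subgroup G) (z : HNNExtension G A B φ) : Prop :=
  ∃ w : ReducedWord G A B, w.prod φ = z ∧ w.head ∈ H ∧ ∀ p ∈ w.toList, p.2 ∈ H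

theorem HasReducedWordOver.of_mul {z : HNNExtension G A B φ} (hz : HasReducedWordOver H z)
    {h : G} (hh : h ∈ H) : HasReducedWordOver H (of h * z) := by
  obtain ⟨w, rfl, hhead, htail⟩ := hz
  exact ⟨{ w with head := h * w.head }, by simp [ReducedWord.prod, mul_assoc],
    mul_mem hh hhead, htail⟩

theorem HasReducedWordOver.t_pow_mul (hφ : ∀ a : A, (a : G) ∈ H ↔ (φ a : G) ∈ H)
    {z : HNNExtension G A B φ} (hz : HasReducedWordOver H z) (u : ℤˣ) :
    HasReducedWordOver H (t ^ (u : ℤ) * z) := by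
  obtain ⟨⟨g, l, hl⟩, rfl, hg, hlH⟩ := hz
  by_cases hred : List.IsChain (fun a b : ℤˣ × G => a.2 ∈ toSubgroup A B a.1 → a.1 = b.1)
    ((u, g) :: l)
  · exact ⟨⟨1, (u, g) :: l, hred⟩, by simp [ReducedWord.prod, mul_assoc], one_mem H,
      List.forall_mem_cons.2 ⟨hg, hlH⟩⟩
  obtain _ | ⟨⟨u', g'⟩, l⟩ := l
  · simp at hred
  simp only [List.isChain_cons_cons, hl, and_true, Classical.not_imp] at hred
  obtain ⟨hgu, huu'⟩ := hred
  obtain rfl : u' = -u := by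
    rcases Int.units_eq_one_or u with rfl | rfl <;> rcases Int.units_eq_one_or u' with rfl | rfl <;>
      simp_all
  simp only [List.forall_mem_cons] at hlH
  refine ⟨⟨toSubgroupEquiv φ u ⟨g, hgu⟩ * g', l, hl.tail⟩, ?_,
    mul_mem ((mem_iff_toSubgroupEquiv_mem hφ u ⟨g, hgu⟩).1 hg) hlH.1, hlH.2⟩
  have hpinch := units_pow_t_mul_of (φ := φ) u ⟨g, hgu⟩
  simp only [ReducedWord.prod, List.map_cons, List.prod_cons, map_mul, ← mul_assoc, hpinch]
  simp

theorem hasReducedWordOver_of_mem_closure (hφ : ∀ a : A, (a : G) ∈ H ↔ (φ a : G) ∈ H)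
    {z : HNNExtension G A B φ} (hz : z ∈ Subgroup.closure (insert t (of '' (H : Set G)))) :
    HasReducedWordOver H z := by
  induction hz using Subgroup.closure_induction_left with
  | one => exact ⟨ReducedWord.empty G A B, by simp [ReducedWord.prod], one_mem H, by simp⟩
  | mul_left s hs z _ hz =>
    obtain rfl | ⟨h, hh, rfl⟩ := hs
    · simpa using hz.t_pow_mul hφ 1
    · exact hz.of_mul hh
  | inv_mul_cancel s hs z _ hz =>
    obtain rfl | ⟨h, hh, rfl⟩ := hs
    · simpa using hz.t_pow_mul hφ (-1)
    · simpa using hz.of_mul (inv_mem hh)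

theorem comap_of_closure_insert_t (hφ : ∀ a : A, (a : G) ∈ H ↔ (φ a : G) ∈ H) :
    (Subgroup.closure (insert t (of '' (H : Set G)))).comap
      (of : G →* HNNExtension G A B φ) = H := by
  ext g
  refine ⟨fun hg => ?_, fun hg => Subgroup.subset_closure (.inr ⟨g, hg, rfl⟩)⟩
  obtain ⟨w, hw, hhead, -⟩ := hasReducedWordOver_of_mem_closure hφ hg
  have hnil : w.toList = [] := ReducedWord.toList_eq_nil_of_mem_of_range φ w ⟨g, hw.symm⟩
  have hg_eq : w.head = g := of_injective φ (by simpa [ReducedWord.prod, hnil] using hw)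
  exact hg_eq ▸ hhead

theorem exists_stable_letter {K : Type v} [Group K] {φ ψ : K →* G} (hφ : Injective φ)
    (hψ : Injective ψ) (hH : H.comap φ = H.comap ψ) :
    ∃ (G' : Type u) (_ : Group G') (j : G →* G') (H' : Subgroup G') (r : G'),
      Injective j ∧ H'.comap j = H ∧ r ∈ H' ∧ ∀ a, SemiconjBy r (j (φ a)) (j (ψ a)) := by
  let θ : φ.range ≃* ψ.range := (φ.ofInjective hφ).symm.trans (ψ.ofInjective hψ)
  have hθ (a : K) : θ (φ.ofInjective hφ a) = ψ.ofInjective hψ a := by simp [θ]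
  refine ⟨HNNExtension G φ.range ψ.range θ, inferInstance, of,
    Subgroup.closure (insert t (of '' (H : Set G))), t, of_injective θ,
    comap_of_closure_insert_t fun b => ?_, Subgroup.subset_closure (.inl rfl), fun a => ?_⟩
  · obtain ⟨a, rfl⟩ := (φ.ofInjective hφ).surjective b
    rw [hθ]
    exact SetLike.ext_iff.1 hH a
  · have h := t_mul_of (φ := θ) (φ.ofInjective hφ a)
    rwa [hθ] at h

theorem exists_stable_letters {ι : Type*} [Finite ι] {K : Type v} [Group K] {φ ψ : ι → K →* G}
    (hφ : ∀ i, Injective (φ i)) (hψ : ∀ i, Injective (ψ i))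
    (hH : ∀ i, H.comap (φ i) = H.comap (ψ i)) :
    ∃ (G' : Type u) (_ : Group G') (j : G →* G') (H' : Subgroup G') (r : ι → G'),
      Injective j ∧ H'.comap j = H ∧
        ∀ i, r i ∈ H' ∧ ∀ a, SemiconjBy (r i) (j (φ i a)) (j (ψ i a)) := by
  induction ι using Finite.induction_empty_option with
  | of_equiv e ih =>
    obtain ⟨G', _, j, H', r, hj, hH', hr⟩ :=
      ih (fun i => hφ (e i)) (fun i => hψ (e i)) (fun i => hH (e i))
    exact ⟨G', inferInstance, j, H', r ∘ e.symm, hj, hH', fun i => by simpa using hr (e.symm i)⟩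
  | h_empty => exact ⟨G, inferInstance, .id G, H, isEmptyElim, injective_id, rfl, isEmptyElim⟩
  | h_option ih =>
    obtain ⟨G₁, _, j₁, H₁, r, hj₁, rfl, hr⟩ :=
      ih (fun i => hφ (some i)) (fun i => hψ (some i)) (fun i => hH (some i))
    obtain ⟨G₂, _, j₂, H₂, r', hj₂, rfl, hr', hr'_conj⟩ :=
      exists_stable_letter (φ := j₁.comp (φ none)) (ψ := j₁.comp (ψ none))
        (hj₁.comp (hφ none)) (hj₁.comp (hψ none)) (hH none)
    refine ⟨G₂, inferInstance, j₂.comp j₁, H₂, (Option.elim · r' (j₂ ∘ r)), hj₂.comp hj₁, rfl, ?_⟩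
    rintro (_ | i)
    · exact ⟨hr', hr'_conj⟩
    · exact ⟨(hr i).1, fun a => ((hr i).2 a).map j₂⟩

end HNN

theorem commute_swap_none_some_iff {G X : Type*} [Group G] [MulAction G X] [DecidableEq X]
    (x : X) (g : G) :
    Commute (Equiv.swap none (some x)) (MulAction.toPermHom G (Option X) g) ↔ g • x = x := by
  rw [Commute.symm_iff, commute_iff_eq, Equiv.mul_swap_eq_swap_mul, mul_left_inj]
  simp only [MulAction.toPermHom_apply, MulAction.toPerm_apply, Option.smul_none, Option.smul_some]
  exact ⟨fun h => by simpa using DFunLike.congr_fun h none, fun h => by rw [h]⟩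

-- Adjoin a fixed point to the action on `G ⧸ H` and transpose it with the base coset.
theorem exists_commute_iff_mem {G : Type u} [Group G] (H : Subgroup G) :
    ∃ (G' : Type u) (_ : Group G') (j : G →* G') (k : G'), ∀ g, Commute k (j g) ↔ g ∈ H := by
  classical
  refine ⟨Equiv.Perm (Option (G ⧸ H)), inferInstance, MulAction.toPermHom _ _,
    Equiv.swap none (some ((1 : G) : G ⧸ H)), fun g => ?_⟩
  rw [commute_swap_none_some_iff, ← MulAction.mem_stabilizer_iff, MulAction.stabilizer_quotient]

/-! ### Lamplighter groups -/

section Wreath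

open RegularWreathProduct

variable {D P Q : Type*} [Group D] [Group P] [Group Q]

/-- The element of the wreath product whose lamp configuration is `d` at `q` and trivial
elsewhere. -/
def lamp [DecidableEq Q] (q : Q) (d : D) : D ≀ᵣ Q := ⟨Pi.mulSingle q d, 1⟩

theorem lamp_mul [DecidableEq Q] (p q : Q) (d : D) :
    lamp (p * q) d = inl p * lamp q d * (inl p)⁻¹ := by
  ext z
  · simp [lamp, Pi.mulSingle_apply, inv_mul_eq_iff_eq_mul]
  · simp [lamp]

/-- The subgroup of lamp configurations supported on `S`. -/
def lampsOn (D : Type*) [Group D] (S : Set Q) : Subgroup (D ≀ᵣ Q) where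
  carrier := {g | g.right = 1 ∧ ∀ q ∉ S, g.left q = 1}
  one_mem' := by simp
  mul_mem' := by
    rintro a b ⟨ha, ha'⟩ ⟨hb, hb'⟩
    exact ⟨by simp [ha, hb], fun q hq => by simp [ha, ha' q hq, hb' q hq]⟩
  inv_mem' := by
    rintro a ⟨ha, ha'⟩
    exact ⟨by simp [ha], fun q hq => by simp [ha, ha' q hq]⟩

theorem mem_lampsOn {S : Set Q} {g : D ≀ᵣ Q} :
    g ∈ lampsOn D S ↔ g.right = 1 ∧ ∀ q ∉ S, g.left q = 1 :=
  Iff.rfl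

theorem lamp_mem_lampsOn_iff [DecidableEq Q] {S : Set Q} {q : Q} {d : D} (hd : d ≠ 1) :
    lamp q d ∈ lampsOn D S ↔ q ∈ S := by
  refine ⟨fun h => ?_, fun h => ⟨rfl, fun p hp => ?_⟩⟩
  · by_contra hq
    exact hd (by simpa [lamp] using h.2 q hq)
  · simp [lamp, (ne_of_mem_of_not_mem h hp).symm]

theorem injective_of_injective_translate {l : P →* Q} {L : P → Q} (hL : Injective L)
    (hlL : ∀ p p', L (p * p') = l p * L p') : Injective l := fun p p' h => hL <| by
  rw [← mul_one p, ← mul_one p', hlL, hlL, h]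

/-- The homomorphism of wreath products moving the lamp at `p` to `L p`, where `L` is a translate
of the homomorphism `l`. -/
noncomputable def mapLamps (D : Type*) [Group D] (l : P →* Q) (L : P → Q) (hL : Injective L)
    (hlL : ∀ p p', L (p * p') = l p * L p') : D ≀ᵣ P →* D ≀ᵣ Q where
  toFun g := ⟨extend L g.left 1, l g.right⟩
  map_one' := by ext <;> simp [extend_one]
  map_mul' g h := by
    ext q
    · by_cases hq : ∃ p, L p = q
      · obtain ⟨p, rfl⟩ := hq
        have hshift : (l g.right)⁻¹ * L p = L (g.right⁻¹ * p) := by rw [hlL, map_inv]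
        simp [hL.extend_apply, hshift]
      · have hq' : ¬ ∃ p, L p = (l g.right)⁻¹ * q := by
          rintro ⟨p, hp⟩
          exact hq ⟨g.right * p, by rw [hlL, hp, mul_inv_cancel_left]⟩
        simp [extend_apply' _ _ _ hq, extend_apply' _ _ _ hq']
    · simp

section mapLamps

variable {l : P →* Q} {L : P → Q} (hL : Injective L) (hlL : ∀ p p', L (p * p') = l p * L p')

theorem mapLamps_inl (p : P) : mapLamps D l L hL hlL (inl p) = inl (l p) := by
  ext
  · simp [mapLamps, extend_one]
  · simp [mapLamps]

theorem mapLamps_lamp [DecidableEq P] [DecidableEq Q] (p : P) (d : D) :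
    mapLamps D l L hL hlL (lamp p d) = lamp (L p) d := by
  ext q
  · by_cases hq : ∃ p, L p = q
    · obtain ⟨p', rfl⟩ := hq
      simp [mapLamps, lamp, hL.extend_apply, Pi.mulSingle_apply, hL.eq_iff]
    · have hqp : q ≠ L p := fun h => hq ⟨p, h.symm⟩
      simp [mapLamps, lamp, extend_apply' _ _ _ hq, hqp]
  · simp [mapLamps, lamp]

theorem mapLamps_injective : Injective (mapLamps D l L hL hlL) := by
  intro g h hgh
  obtain ⟨hleft, hright⟩ := RegularWreathProduct.ext_iff.1 hgh
  exact RegularWreathProduct.ext (extend_injective hL (1 : Q → D) hleft)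
    (injective_of_injective_translate hL hlL hright)

theorem comap_mapLamps_lampsOn (S : Set Q) :
    (lampsOn D S).comap (mapLamps D l L hL hlL) = lampsOn D (L ⁻¹' S) := by
  ext g
  simp only [Subgroup.mem_comap, mem_lampsOn, Set.mem_preimage]
  refine and_congr (map_eq_one_iff l (injective_of_injective_translate hL hlL))
    ⟨fun h p hp => ?_, fun h q hq => ?_⟩
  · simpa [mapLamps, hL.extend_apply] using h (L p) hp
  · by_cases hq' : ∃ p, L p = q
    · obtain ⟨p, rfl⟩ := hq'
      simpa [mapLamps, hL.extend_apply] using h p hq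
    · simp [mapLamps, extend_apply' _ _ _ hq']

end mapLamps

end Wreath

/-- An injective affine self-map `v ↦ slope * v + const` of a ring. -/
structure AffineInjection (R : Type*) [Ring R] where
  slope : R
  const : R
  isLeftRegular_slope : IsLeftRegular slope

namespace AffineInjection

open RegularWreathProduct

variable {R : Type*} [Ring R]

instance : CoeFun (AffineInjection R) fun _ => R → R := ⟨fun L v => L.slope * v + L.const⟩

theorem injective (L : AffineInjection R) : Injective L := fun _ _ h =>
  L.isLeftRegular_slope (add_right_cancel h)

theorem injective_multiplicative (L : AffineInjection R) :
    Injective fun v : Multiplicative R => Multiplicative.ofAdd (L v.toAdd) :=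
  Multiplicative.ofAdd.injective.comp (L.injective.comp Multiplicative.toAdd.injective)

/-- The endomorphism of the lamplighter group over `R` moving the lamp at `v` to `L v`. -/
noncomputable def mapLamps (L : AffineInjection R) :
    ℤˣ ≀ᵣ Multiplicative R →* ℤˣ ≀ᵣ Multiplicative R :=
  NovikovBoone.mapLamps ℤˣ (AddMonoidHom.mulLeft L.slope).toMultiplicative
    (fun v => .ofAdd (L v.toAdd)) L.injective_multiplicative
    (fun v w => congrArg Multiplicative.ofAdd (by simp [mul_add, add_assoc]))

theorem mapLamps_inl (L : AffineInjection R) (v : R) :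
    L.mapLamps (inl (.ofAdd v)) = inl (.ofAdd (L.slope * v)) :=
  NovikovBoone.mapLamps_inl _ _ _

theorem mapLamps_lamp_zero [DecidableEq (Multiplicative R)] (L : AffineInjection R) (d : ℤˣ) :
    L.mapLamps (lamp (.ofAdd 0) d) = lamp (.ofAdd L.const) d := by
  simp [mapLamps, NovikovBoone.mapLamps_lamp]

end AffineInjection

/-- A family of rewriting rules `src i v ↦ tgt i v` on `ℤ × ℤ`. With componentwise
multiplication on `ℤ × ℤ`, the slopes are pairs of integers acting on the two coordinates. -/
structure AffineSystem (ι : Type*) where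
  src : ι → AffineInjection (ℤ × ℤ)
  tgt : ι → AffineInjection (ℤ × ℤ)

/-- One application of one of the rules of `A`. -/
def AffineSystem.Step {ι : Type*} (A : AffineSystem ι) (v w : ℤ × ℤ) : Prop :=
  ∃ i u, v = A.src i u ∧ w = A.tgt i u

/-- Generators of the group attached to an affine system: `x` and `y` shift the two coordinates,
`t` is a lamp at the origin, `r i` implements the `i`-th rule, and `k` detects the lamps equivalent
to a given one. -/
inductive Generator (ι : Type*)
  | x | y | t | k
  | r (i : ι)
  deriving Fintype

namespace Generator

variable {ι G : Type*} [Group G] (γ : Generator ι → G)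

/-- The image under `γ` of the element of the group shifting the lamps by `v`. -/
def shift (v : ℤ × ℤ) : G := γ x ^ v.1 * γ y ^ v.2

/-- The image under `γ` of the lamp at `v`. -/
def lampAt (v : ℤ × ℤ) : G := shift γ v * γ t * (shift γ v)⁻¹

end Generator

open Generator
open scoped commutatorElement

/-! ### The group of an affine system -/

section Relators

variable {ι G : Type*} [Group G]

/-- Images `γ` of the generators satisfying the defining relations; the pairs `(v, v')` related by
`SemiconjBy (r i)` are those needed for conjugation by `r i` to carry the lamp at `A.src i v` to
the lamp at `A.tgt i v`. -/
structure SatisfiesRelations (A : AffineSystem ι) (v₀ : ℤ × ℤ) (γ : Generator ι → G) : Prop where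
  commute_x_y : Commute (γ x) (γ y)
  commute_k_lampAt : Commute (γ k) (lampAt γ v₀)
  commute_k_r (i : ι) : Commute (γ k) (γ (r i))
  semiconjBy_x (i : ι) :
    SemiconjBy (γ (r i)) (γ x ^ (A.src i).slope.1) (γ x ^ (A.tgt i).slope.1)
  semiconjBy_y (i : ι) :
    SemiconjBy (γ (r i)) (γ y ^ (A.src i).slope.2) (γ y ^ (A.tgt i).slope.2)
  semiconjBy_lampAt (i : ι) :
    SemiconjBy (γ (r i)) (lampAt γ (A.src i).const) (lampAt γ (A.tgt i).const)

/-- The relators expressing `SatisfiesRelations`. -/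
def relators (A : AffineSystem ι) (v₀ : ℤ × ℤ) (γ : Generator ι → G) : Set G :=
  {⁅γ x, γ y⁆, ⁅γ k, lampAt γ v₀⁆} ∪ ⋃ i, {⁅γ k, γ (r i)⁆,
    γ (r i) * γ x ^ (A.src i).slope.1 * (γ (r i))⁻¹ * (γ x ^ (A.tgt i).slope.1)⁻¹,
    γ (r i) * γ y ^ (A.src i).slope.2 * (γ (r i))⁻¹ * (γ y ^ (A.tgt i).slope.2)⁻¹,
    γ (r i) * lampAt γ (A.src i).const * (γ (r i))⁻¹ * (lampAt γ (A.tgt i).const)⁻¹}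

theorem finite_relators [Finite ι] (A : AffineSystem ι) (v₀ : ℤ × ℤ) (γ : Generator ι → G) :
    (relators A v₀ γ).Finite :=
  (Set.toFinite _).union (Set.finite_iUnion fun _ => Set.toFinite _)

theorem mul_inv_mul_inv_eq_one_iff_semiconjBy {a b c : G} :
    a * b * a⁻¹ * c⁻¹ = 1 ↔ SemiconjBy a b c := by
  rw [mul_inv_eq_one, mul_inv_eq_iff_eq_mul, SemiconjBy]

theorem relators_subset_iff {A : AffineSystem ι} {v₀ : ℤ × ℤ} {γ : Generator ι → G} :
    relators A v₀ γ ⊆ {1} ↔ SatisfiesRelations A v₀ γ := by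
  simp only [relators, Set.union_subset_iff, Set.insert_subset_iff, Set.singleton_subset_iff,
    Set.iUnion_subset_iff, Set.mem_singleton_iff, commutatorElement_eq_one_iff_commute,
    mul_inv_mul_inv_eq_one_iff_semiconjBy, forall_and]
  exact ⟨fun ⟨⟨h₁, h₂⟩, h₃, h₄, h₅, h₆⟩ => ⟨h₁, h₂, h₃, h₄, h₅, h₆⟩,
    fun ⟨h₁, h₂, h₃, h₄, h₅, h₆⟩ => ⟨⟨h₁, h₂⟩, h₃, h₄, h₅, h₆⟩⟩

theorem map_lampAt {G' : Type*} [Group G'] (f : G →* G') (γ : Generator ι → G) (v : ℤ × ℤ) :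
    f (lampAt γ v) = lampAt (f ∘ γ) v := by
  simp [lampAt, shift]

theorem image_relators {G' : Type*} [Group G'] (A : AffineSystem ι) (v₀ : ℤ × ℤ)
    (f : G →* G') (γ : Generator ι → G) :
    f '' relators A v₀ γ = relators A v₀ (f ∘ γ) := by
  simp only [relators, Set.image_union, Set.image_iUnion, Set.image_insert_eq, Set.image_singleton,
    map_commutatorElement, map_lampAt, map_mul, map_inv, map_zpow, comp_apply]

theorem lampAt_add {γ : Generator ι → G} (h : Commute (γ x) (γ y)) (v w : ℤ × ℤ) :
    lampAt γ (v + w) = shift γ v * lampAt γ w * (shift γ v)⁻¹ := by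
  have hshift : shift γ (v + w) = shift γ v * shift γ w := by
    simp only [shift, Prod.fst_add, Prod.snd_add, zpow_add, mul_assoc]
    rw [← mul_assoc (γ y ^ v.2), ← (h.zpow_zpow w.1 v.2).eq, mul_assoc]
  simp only [lampAt, hshift, mul_inv_rev, mul_assoc]

theorem shift_mul (γ : Generator ι → G) (v w : ℤ × ℤ) :
    shift γ (v * w) = (γ x ^ v.1) ^ w.1 * (γ y ^ v.2) ^ w.2 := by
  simp [shift, zpow_mul]

namespace SatisfiesRelations

variable {A : AffineSystem ι} {v₀ : ℤ × ℤ} {γ : Generator ι → G}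

theorem semiconjBy_lampAt_apply (h : SatisfiesRelations A v₀ γ) (i : ι) (v : ℤ × ℤ) :
    SemiconjBy (γ (r i)) (lampAt γ (A.src i v)) (lampAt γ (A.tgt i v)) := by
  have hshift : SemiconjBy (γ (r i)) (shift γ ((A.src i).slope * v))
      (shift γ ((A.tgt i).slope * v)) := by
    simp only [shift_mul]
    exact ((h.semiconjBy_x i).zpow_right _).mul_right ((h.semiconjBy_y i).zpow_right _)
  simp only [lampAt_add h.commute_x_y]
  exact (hshift.mul_right (h.semiconjBy_lampAt i)).mul_right hshift.inv_right

theorem commute_k_lampAt_iff_of_step (h : SatisfiesRelations A v₀ γ) {v w : ℤ × ℤ}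
    (hvw : A.Step v w) : Commute (γ k) (lampAt γ v) ↔ Commute (γ k) (lampAt γ w) := by
  obtain ⟨i, u, rfl, rfl⟩ := hvw
  rw [← Commute.conj_iff (γ (r i)), (h.semiconjBy_lampAt_apply i u).eq, mul_inv_cancel_right,
    ← (h.commute_k_r i).eq, mul_inv_cancel_right]

theorem commute_k_lampAt_of_eqvGen (h : SatisfiesRelations A v₀ γ) {v : ℤ × ℤ}
    (hv : EqvGen A.Step v v₀) : Commute (γ k) (lampAt γ v) := by
  have hinv : ∀ v w, EqvGen A.Step v w →
      (Commute (γ k) (lampAt γ v) ↔ Commute (γ k) (lampAt γ w)) := by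
    intro v w hvw
    induction hvw with
    | rel v w hvw => exact h.commute_k_lampAt_iff_of_step hvw
    | refl v => rfl
    | symm v w _ ih => exact ih.symm
    | trans u v w _ _ ih₁ ih₂ => exact ih₁.trans ih₂
  exact (hinv v v₀ hv).2 h.commute_k_lampAt

end SatisfiesRelations

section Model

open RegularWreathProduct

theorem AffineSystem.comap_mapLamps_src_eq_tgt (A : AffineSystem ι) (v₀ : ℤ × ℤ) (i : ι) :
    (lampsOn ℤˣ {v | EqvGen A.Step v.toAdd v₀}).comap (A.src i).mapLamps =
      (lampsOn ℤˣ {v | EqvGen A.Step v.toAdd v₀}).comap (A.tgt i).mapLamps := by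
  rw [AffineInjection.mapLamps, AffineInjection.mapLamps, comap_mapLamps_lampsOn,
    comap_mapLamps_lampsOn]
  congr 1
  ext v
  have hstep : EqvGen A.Step (A.src i v.toAdd) (A.tgt i v.toAdd) := .rel _ _ ⟨i, v.toAdd, rfl, rfl⟩
  exact ⟨fun h => (hstep.symm).trans _ _ _ h, fun h => hstep.trans _ _ _ h⟩

section

variable {γ : Generator ι → G} {j : ℤˣ ≀ᵣ Multiplicative (ℤ × ℤ) →* G}
  (hx : γ x = j (inl (.ofAdd (1, 0)))) (hy : γ y = j (inl (.ofAdd (0, 1))))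
include hx hy

theorem shift_eq_map_inl (v : ℤ × ℤ) : shift γ v = j (inl (.ofAdd v)) := by
  simp only [shift, hx, hy, ← map_zpow, ← map_mul, ← ofAdd_zsmul, ← ofAdd_add]
  simp

theorem lampAt_eq_map_lamp (ht : γ t = j (lamp (.ofAdd 0) (-1))) (v : ℤ × ℤ) :
    lampAt γ v = j (lamp (.ofAdd v) (-1)) := by
  rw [lampAt, shift_eq_map_inl hx hy, ht, ← map_inv, ← map_mul, ← map_mul, ← lamp_mul, ← ofAdd_add,
    add_zero]

theorem satisfiesRelations_of_lamplighter {A : AffineSystem ι} {v₀ : ℤ × ℤ}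
    (ht : γ t = j (lamp (.ofAdd 0) (-1))) (hk : Commute (γ k) (lampAt γ v₀))
    (hkr : ∀ i, Commute (γ k) (γ (r i)))
    (hr : ∀ i g, SemiconjBy (γ (r i)) (j ((A.src i).mapLamps g)) (j ((A.tgt i).mapLamps g))) :
    SatisfiesRelations A v₀ γ where
  commute_x_y := by
    rw [hx, hy]
    exact (Commute.all _ _).map (j.comp inl)
  commute_k_lampAt := hk
  commute_k_r := hkr
  semiconjBy_x i := by
    simpa [AffineInjection.mapLamps_inl, ← shift_eq_map_inl hx hy, shift] using
      hr i (inl (.ofAdd (1, 0)))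
  semiconjBy_y i := by
    simpa [AffineInjection.mapLamps_inl, ← shift_eq_map_inl hx hy, shift] using
      hr i (inl (.ofAdd (0, 1)))
  semiconjBy_lampAt i := by
    simpa only [AffineInjection.mapLamps_lamp_zero, ← lampAt_eq_map_lamp hx hy ht] using
      hr i (lamp (.ofAdd 0) (-1))

end

theorem exists_satisfiesRelations [Finite ι] (A : AffineSystem ι) (v₀ : ℤ × ℤ) :
    ∃ (G : Type) (_ : Group G) (γ : Generator ι → G), SatisfiesRelations A v₀ γ ∧
      ∀ v, Commute (γ k) (lampAt γ v) → EqvGen A.Step v v₀ := by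
  obtain ⟨G₁, _, j₁, H, ρ, -, hH, hρ⟩ := exists_stable_letters
    (fun i => mapLamps_injective _ _) (fun i => mapLamps_injective _ _)
    (A.comap_mapLamps_src_eq_tgt v₀)
  obtain ⟨G₂, _, j₂, κ, hκ⟩ := exists_commute_iff_mem H
  let j : ℤˣ ≀ᵣ Multiplicative (ℤ × ℤ) →* G₂ := j₂.comp j₁
  let γ : Generator ι → G₂ := fun
    | .x => j (inl (.ofAdd (1, 0)))
    | .y => j (inl (.ofAdd (0, 1)))
    | .t => j (lamp (.ofAdd 0) (-1))
    | .k => κ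
    | .r i => j₂ (ρ i)
  have hcommute (v : ℤ × ℤ) : Commute (γ k) (lampAt γ v) ↔ EqvGen A.Step v v₀ := by
    rw [lampAt_eq_map_lamp (j := j) rfl rfl rfl]
    refine (hκ _).trans ?_
    rw [← Subgroup.mem_comap, hH, lamp_mem_lampsOn_iff (by decide)]
    rfl
  exact ⟨G₂, inferInstance, γ, satisfiesRelations_of_lamplighter (j := j) rfl rfl rfl
    ((hcommute v₀).2 (.refl v₀)) (fun i => (hκ _).2 (hρ i).1)
    (fun i g => ((hρ i).2 g).map j₂), fun v => (hcommute v).1⟩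

end Model

theorem commutator_mem_normalClosure_relators_iff [Finite ι] (A : AffineSystem ι) (v₀ v : ℤ × ℤ)
    {α : Type*} (e : Generator ι ≃ α) :
    ⁅FreeGroup.of (e k), lampAt (FreeGroup.of ∘ e) v⁆ ∈
      Subgroup.normalClosure (relators A v₀ (FreeGroup.of ∘ e)) ↔ EqvGen A.Step v v₀ := by
  constructor
  · intro hmem
    obtain ⟨G, _, γ, hγ, hG⟩ := exists_satisfiesRelations A v₀
    let f : FreeGroup α →* G := FreeGroup.lift (γ ∘ e.symm)
    have hf : f ∘ FreeGroup.of ∘ e = γ := by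
      ext a
      simp [f]
    have hker : Subgroup.normalClosure (relators A v₀ (FreeGroup.of ∘ e)) ≤ f.ker := by
      refine Subgroup.normalClosure_le_normal fun g hg => relators_subset_iff.2 hγ ?_
      rw [← hf, ← image_relators]
      exact Set.mem_image_of_mem f hg
    have hcommute := hker hmem
    rw [MonoidHom.mem_ker, map_commutatorElement, map_lampAt, hf,
      commutatorElement_eq_one_iff_commute] at hcommute
    exact hG v (by simpa [f] using hcommute)
  · intro hv
    let N := Subgroup.normalClosure (relators A v₀ (FreeGroup.of ∘ e))
    have hN : SatisfiesRelations A v₀ (QuotientGroup.mk' N ∘ FreeGroup.of ∘ e) := by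
      rw [← relators_subset_iff, ← image_relators]
      rintro _ ⟨g, hg, rfl⟩
      exact (QuotientGroup.eq_one_iff g).2 (Subgroup.subset_normalClosure hg)
    rw [← QuotientGroup.eq_one_iff, ← QuotientGroup.mk'_apply, map_commutatorElement, map_lampAt,
      commutatorElement_eq_one_iff_commute]
    exact hN.commute_k_lampAt_of_eqvGen hv

end Relators

theorem eqvGen_iff_reflTransGen_of_rightUnique {α : Type*} {s : α → α → Prop}
    (hs : Relator.RightUnique s) {v₀ : α} (hv₀ : ∀ w, s v₀ w → w = v₀) {v : α} :
    EqvGen s v v₀ ↔ ReflTransGen s v v₀ := by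
  refine ⟨fun h => ?_, fun h => EqvGen.reflTransGen_le_eqvGen _ _ _ h⟩
  have hinv : ∀ a b, EqvGen s a b → (ReflTransGen s a v₀ ↔ ReflTransGen s b v₀) := by
    intro a b hab
    induction hab with
    | rel a b hab =>
      refine ⟨fun ha => ?_, fun hb => .head hab hb⟩
      obtain rfl | ⟨c, hac, hc⟩ := ha.cases_head
      · rw [hv₀ b hab]
      · rwa [hs hab hac]
    | refl a => rfl
    | symm a b _ ih => exact ih.symm
    | trans a b c _ _ ih₁ ih₂ => exact ih₁.trans ih₂
  exact (hinv v v₀ h).2 .refl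

/-! ### Simulation of Turing machines by affine systems -/

section Machine

open Turing

variable {m Q : ℕ}

/-- The code of a configuration with state `q` and half-tapes coded by `l` and `r`. The state is
the last digit of the first coordinate in base `Q + 1`; the extra state `none`, entered when the
machine halts, is the digit `0`. -/
def encode (q : Option (Fin Q)) (l r : ℤ) : ℤ × ℤ :=
  ((Q + 1 : ℕ) * l + ((finSuccEquiv Q).symm q : ℕ), r)

theorem encode_none_zero_zero : encode (none : Option (Fin Q)) 0 0 = 0 := by
  simp [encode]

theorem mul_add_val_inj {n : ℕ} {k l : ℤ} {a b : Fin n} :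
    (n : ℤ) * k + (a : ℕ) = n * l + (b : ℕ) ↔ k = l ∧ a = b := by
  refine ⟨fun h => ?_, fun ⟨hkl, hab⟩ => by rw [hkl, hab]⟩
  have hmod := congrArg (· % (n : ℤ)) h
  simp only [Int.mul_add_emod_self_left, ← Int.natCast_mod, Nat.mod_eq_of_lt a.2,
    Nat.mod_eq_of_lt b.2, Nat.cast_inj] at hmod
  rw [hmod] at h
  exact ⟨mul_left_cancel₀ (Nat.cast_ne_zero.2 a.pos.ne') (add_right_cancel h), Fin.ext hmod⟩

theorem encode_inj {q q' : Option (Fin Q)} {l l' r r' : ℤ} :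
    encode q l r = encode q' l' r' ↔ q = q' ∧ l = l' ∧ r = r' := by
  simp only [encode, Prod.mk.injEq, mul_add_val_inj, Equiv.apply_eq_iff_eq]
  tauto

/-- The affine map `v ↦ encode q (m ^ i * v.1 + b) (m ^ j * v.2 + c)`. -/
def encodeAffine (m : ℕ) [NeZero m] (q : Option (Fin Q)) (i b j c : ℕ) :
    AffineInjection (ℤ × ℤ) where
  slope := ((Q + 1 : ℕ) * m ^ i, m ^ j)
  const := encode q b c
  isLeftRegular_slope :=
    have hm : (m : ℤ) ≠ 0 := Nat.cast_ne_zero.2 (NeZero.ne m)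
    (IsRegular.of_ne_zero (mul_ne_zero (Nat.cast_ne_zero.2 Q.succ_ne_zero)
      (pow_ne_zero i hm))).left.prodMk (IsRegular.of_ne_zero (pow_ne_zero j hm)).left

variable [NeZero m]

theorem encodeAffine_apply (q : Option (Fin Q)) (i b j c : ℕ) (v : ℤ × ℤ) :
    encodeAffine m q i b j c v = encode q (m ^ i * v.1 + b) (m ^ j * v.2 + c) := by
  ext
  · simp only [encodeAffine, encode, Prod.fst_add, Prod.fst_mul]
    ring
  · rfl

/-- The configurations reached by executing an instruction when the digits next to the head are
`e` on the left half-tape and `a` on the right one; when there is no instruction, both digits are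
erased and the halting state is entered. -/
def target (a e : Fin m) :
    Option (Fin Q × TM0.Stmt (Fin m)) → AffineInjection (ℤ × ℤ)
  | none => encodeAffine m (none : Option (Fin Q)) 0 0 0 0
  | some (q, .write a') => encodeAffine m (some q) 1 e 1 a'
  | some (q, .move .right) => encodeAffine m (some q) 2 (m * e + a) 0 0
  | some (q, .move .left) => encodeAffine m (some q) 0 0 2 (m * a + e)

/-- The number whose base `m` digits, least significant first, are the symbols of a half-tape. -/
def halfTapeCode (L : ListBlank (Fin m)) : ℕ :=
  L.liftOn (fun l => Nat.ofDigits m (l.map Fin.val)) <| by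
    rintro l _ ⟨n, rfl⟩
    simp [Nat.ofDigits_append_replicate_zero]

theorem halfTapeCode_mk (l : List (Fin m)) :
    halfTapeCode (.mk l) = Nat.ofDigits m (l.map Fin.val) := rfl

theorem halfTapeCode_cons (a : Fin m) (L : ListBlank (Fin m)) :
    halfTapeCode (L.cons a) = m * halfTapeCode L + a := by
  induction L using ListBlank.induction_on with
  | h l => exact Nat.ofDigits_cons.trans (add_comm _ _)

theorem halfTapeCode_eq (L : ListBlank (Fin m)) :
    halfTapeCode L = m * halfTapeCode L.tail + L.head := by
  rw [← halfTapeCode_cons, ListBlank.cons_head_tail]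

/-- The point of the plane coding a configuration of a Turing machine. -/
def code (C : TM0.Cfg (Fin m) (Fin Q)) : ℤ × ℤ :=
  encode (some C.q) (halfTapeCode C.Tape.left) (halfTapeCode C.Tape.right₀)

theorem code_mk' (q : Fin Q) (L R : ListBlank (Fin m)) :
    code ⟨q, Tape.mk' L R⟩ = encode (some q) (halfTapeCode L) (halfTapeCode R) := by
  simp only [code, Tape.mk'_left, Tape.mk'_right₀]

variable [NeZero Q]

theorem code_init (l : List (Fin m)) :
    code (TM0.init l : TM0.Cfg (Fin m) (Fin Q)) = (1, (halfTapeCode (.mk l) : ℤ)) := by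
  rw [TM0.init, Tape.mk₁, Tape.mk₂, code_mk']
  simp only [encode, Fin.default_eq_zero, finSuccEquiv_symm_some, Fin.val_succ, Fin.val_zero,
    halfTapeCode_mk]
  simp

/-- The affine system simulating `M`, with one rule for each state and pair of digits next to
the head. -/
def machineSystem (M : TM0.Machine (Fin m) (Fin Q)) :
    AffineSystem (Option (Fin Q) × Fin m × Fin m) where
  src := fun (q, a, e) => encodeAffine m q 1 e 1 a
  tgt := fun (q, a, e) => target a e (q.bind (M · a))

variable (M : TM0.Machine (Fin m) (Fin Q))

theorem step_encode (q : Option (Fin Q)) (a e : Fin m) (l r : ℤ) :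
    (machineSystem M).Step (encode q (m * l + (e : ℕ)) (m * r + (a : ℕ)))
      (target a e (q.bind (M · a)) (l, r)) :=
  ⟨(q, a, e), (l, r), by simp [machineSystem, encodeAffine_apply], rfl⟩

theorem rightUnique_step : Relator.RightUnique (machineSystem M).Step := by
  rintro _ _ _ ⟨⟨q, a, e⟩, v, rfl, rfl⟩ ⟨⟨q', a', e'⟩, v', hsrc, rfl⟩
  simp only [machineSystem, encodeAffine_apply, encode_inj, pow_one, mul_add_val_inj] at hsrc
  obtain ⟨rfl, ⟨h₁, rfl⟩, h₂, rfl⟩ := hsrc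
  rw [Prod.ext h₁ h₂]

theorem step_encode_none (l r : ℕ) :
    (machineSystem M).Step (encode (none : Option (Fin Q)) l r)
      (encode (none : Option (Fin Q)) (l / m : ℕ) (r / m : ℕ)) := by
  simpa [target, encodeAffine_apply, Int.mul_ediv_add_emod] using
    step_encode M none (Fin.ofNat m r) (Fin.ofNat m l) (l / m : ℕ) (r / m : ℕ)

theorem step_zero : (machineSystem M).Step 0 0 := by
  simpa [encode_none_zero_zero] using step_encode_none M 0 0

theorem reflTransGen_encode_none (hm : 1 < m) (l r : ℕ) :
    ReflTransGen (machineSystem M).Step (encode (none : Option (Fin Q)) l r) 0 := by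
  induction hn : l + r using Nat.strong_induction_on generalizing l r with
  | _ n ih =>
    obtain rfl | hpos := Nat.eq_zero_or_pos n
    · obtain ⟨rfl, rfl⟩ : l = 0 ∧ r = 0 := by omega
      simpa [encode_none_zero_zero] using ReflTransGen.refl
    refine .head (step_encode_none M l r) (ih _ ?_ _ _ rfl)
    have hl := Nat.div_le_self l m
    have hr := Nat.div_le_self r m
    obtain rfl | hl_pos := Nat.eq_zero_or_pos l
    · have := Nat.div_lt_self (by omega : 0 < r) hm
      omega
    · have := Nat.div_lt_self hl_pos hm
      omega

theorem step_code_mk' (q : Fin Q) (L R : ListBlank (Fin m)) :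
    (machineSystem M).Step (code ⟨q, Tape.mk' L R⟩)
      (target R.head L.head (M q R.head) (halfTapeCode L.tail, halfTapeCode R.tail)) := by
  rw [code_mk', halfTapeCode_eq L, halfTapeCode_eq R]
  push_cast
  exact step_encode M (some q) R.head L.head _ _

theorem step_code_of_mem_step {C C' : TM0.Cfg (Fin m) (Fin Q)} (h : C' ∈ TM0.step M C) :
    (machineSystem M).Step (code C) (code C') := by
  obtain ⟨q, T⟩ := C
  obtain ⟨L, R, rfl⟩ := T.exists_mk'
  obtain ⟨⟨q', s⟩, hM, rfl⟩ := Option.map_eq_some_iff.1 h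
  rw [Tape.mk'_head] at hM
  have hstep := step_code_mk' M q L R
  rw [hM] at hstep
  convert hstep using 1
  rcases s with (_ | _) | a
  · simp only [Tape.move_left_mk', code_mk', target, encodeAffine_apply, halfTapeCode_cons,
      halfTapeCode_eq R]
    congr 1 <;> push_cast <;> ring
  · simp only [Tape.move_right_mk', code_mk', target, encodeAffine_apply, halfTapeCode_cons,
      halfTapeCode_eq L]
    congr 1 <;> push_cast <;> ring
  · simp only [Tape.write_mk', code_mk', target, encodeAffine_apply, halfTapeCode_cons,
      halfTapeCode_eq L]
    congr 1 <;> push_cast <;> ring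

theorem reflTransGen_code_of_step_eq_none (hm : 1 < m) {C : TM0.Cfg (Fin m) (Fin Q)}
    (h : TM0.step M C = none) : ReflTransGen (machineSystem M).Step (code C) 0 := by
  obtain ⟨q, T⟩ := C
  obtain ⟨L, R, rfl⟩ := T.exists_mk'
  have hM : M q R.head = none := by simpa [TM0.step] using h
  have hstep := step_code_mk' M q L R
  rw [hM] at hstep
  refine .head hstep ?_
  simpa [target, encodeAffine_apply] using reflTransGen_encode_none M hm _ _

theorem reflTransGen_code_iff (hm : 1 < m) (C : TM0.Cfg (Fin m) (Fin Q)) :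
    ReflTransGen (machineSystem M).Step (code C) 0 ↔
      (StateTransition.eval (TM0.step M) C).Dom := by
  constructor
  · intro h
    generalize hv : code C = v at h
    induction h using ReflTransGen.head_induction_on generalizing C with
    | refl =>
      rw [code, ← encode_none_zero_zero (Q := Q), encode_inj] at hv
      exact absurd hv.1 (Option.some_ne_none _)
    | head hvw _ ih =>
      subst hv
      rcases hC : TM0.step M C with _ | C'
      · exact Part.dom_iff_mem.2 ⟨C, StateTransition.mem_eval.2 ⟨.refl, hC⟩⟩
      · rw [StateTransition.reaches_eval (.single hC)]
        exact ih C' (rightUnique_step M (step_code_of_mem_step M hC) hvw)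
  · intro h
    obtain ⟨C', hC'⟩ := Part.dom_iff_mem.1 h
    obtain ⟨hreach, hhalt⟩ := StateTransition.mem_eval.1 hC'
    have hcode : ReflTransGen (machineSystem M).Step (code C) (code C') :=
      hreach.lift code fun _ _ => step_code_of_mem_step M
    exact hcode.trans (reflTransGen_code_of_step_eq_none M hm hhalt)

theorem eqvGen_init_iff (hm : 1 < m) (l : List (Fin m)) :
    EqvGen (machineSystem M).Step (1, (halfTapeCode (.mk l) : ℤ)) 0 ↔
      (TM0.eval M l).Dom := by
  rw [eqvGen_iff_reflTransGen_of_rightUnique (rightUnique_step M)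
    (fun w hw => rightUnique_step M hw (step_zero M)), ← code_init (Q := Q),
    reflTransGen_code_iff M hm]
  rfl

end Machine

/-! ### A machine with undecidable halting problem -/

section UniversalMachine

open Turing PartrecToTM2

theorem exists_equiv_fin_map_default (α : Type*) [Inhabited α] [Finite α] :
    ∃ (n : ℕ) (_ : NeZero n) (e : α ≃ Fin n), e default = default := by
  obtain ⟨n, ⟨e⟩⟩ := Finite.exists_equiv_fin α
  have : NeZero n := ⟨(e default).pos.ne'⟩
  exact ⟨n, this, e.trans (Equiv.swap (e default) default), Equiv.swap_apply_left _ _⟩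

theorem exists_fin_machine {Γ Λ : Type*} [Inhabited Γ] [Finite Γ] [Inhabited Λ]
    (M : TM0.Machine Γ Λ) {S : Finset Λ} (hS : TM0.Supports M S) :
    ∃ (m Q : ℕ) (_ : NeZero m) (_ : NeZero Q) (f : Γ ≃ Fin m) (M' : TM0.Machine (Fin m) (Fin Q)),
      ∀ l, (TM0.eval M' (l.map f)).Dom ↔ (TM0.eval M l).Dom := by
  classical
  let _ : Inhabited S := ⟨⟨default, hS.1⟩⟩
  obtain ⟨m, _, f, hf⟩ := exists_equiv_fin_map_default Γ
  obtain ⟨Q, _, s, hs⟩ := exists_equiv_fin_map_default S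
  let f₁ : PointedMap Γ (Fin m) := ⟨f, hf⟩
  let f₂ : PointedMap (Fin m) Γ := ⟨f.symm, f.symm_apply_eq.2 hf.symm⟩
  let g₁ : PointedMap Λ (Fin Q) :=
    ⟨fun q => if hq : q ∈ S then s ⟨q, hq⟩ else default, (dif_pos hS.1).trans hs⟩
  let g₂ : Fin Q → Λ := fun q => s.symm q
  have hg : ∀ q ∈ S, g₂ (g₁ q) = q := fun q hq => by
    change (s.symm (dite _ _ _) : Λ) = q
    rw [dif_pos hq, s.symm_apply_apply]
  refine ⟨m, Q, inferInstance, inferInstance, f, M.map f₁ f₂ g₁ g₂, fun l => ?_⟩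
  exact StateTransition.tr_eval_dom (TM0.Machine.map_respects M f₁ f₂ g₁ g₂ hS
    f.symm_apply_apply hg) ⟨hS.1, TM0.map_init f₁ g₁ l⟩

theorem exists_machine_eval_dom_iff {f : ℕ →. ℕ} (hf : Partrec f) :
    ∃ (Λ : Type) (_ : Inhabited Λ) (M : TM0.Machine (TM2to1.Γ' K' fun _ => Γ') Λ) (S : Finset Λ),
      TM0.Supports M S ∧
        ∀ n, (TM0.eval M (TM2to1.trInit K'.main (trList [n]))).Dom ↔ (f n).Dom := by
  obtain ⟨c, hc⟩ := ToPartrec.Code.exists_code (Nat.Partrec'.part_iff₁.2 hf)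
  let _ : Inhabited Λ' := ⟨trNormal c Cont'.halt⟩
  refine ⟨_, inferInstance, TM1to0.tr (TM2to1.tr PartrecToTM2.tr), TM1to0.trStmts _ (TM2to1.trSupp
    PartrecToTM2.tr (codeSupp c Cont'.halt)), TM1to0.tr_supports _ (TM2to1.tr_supports _
      (PartrecToTM2.tr_supports c Cont'.halt)), fun n => ?_⟩
  have hinit : (TM2.init K'.main (trList [n]) : Cfg') = PartrecToTM2.init c [n] := by
    rw [TM2.init, PartrecToTM2.init]
    congr 1
    funext k
    cases k <;> rfl
  calc (TM0.eval (TM1to0.tr (TM2to1.tr PartrecToTM2.tr))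
        (TM2to1.trInit K'.main (trList [n]))).Dom
    _ ↔ (TM2.eval PartrecToTM2.tr K'.main (trList [n])).Dom := by
      rw [TM1to0.tr_eval]
      exact TM2to1.tr_eval_dom PartrecToTM2.tr K'.main (trList [n])
    _ ↔ (StateTransition.eval (TM2.step PartrecToTM2.tr) (PartrecToTM2.init c [n])).Dom := by
      rw [← hinit]
      rfl
    _ ↔ (ToPartrec.Code.eval c [n]).Dom := by
      rw [PartrecToTM2.tr_eval]
      rfl
    _ ↔ (f n).Dom := by
      rw [show ToPartrec.Code.eval c [n] = _ from hc ⟨[n], rfl⟩]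
      rfl

theorem trNum_bit0 : ∀ {u : Num}, u ≠ 0 → trNum u.bit0 = Γ'.bit0 :: trNum u
  | .zero, h => absurd rfl h
  | .pos _, _ => rfl

theorem trNum_bit1 : ∀ u : Num, trNum u.bit1 = Γ'.bit1 :: trNum u
  | .zero | .pos _ => rfl

theorem trNat_bit {b : Bool} {n : ℕ} (h : Nat.bit b n ≠ 0) :
    trNat (Nat.bit b n) = cond b Γ'.bit1 Γ'.bit0 :: trNat n := by
  rw [trNat, trNat, ← Num.ofNat'_eq, Num.ofNat'_bit, Num.ofNat'_eq]
  cases b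
  · exact trNum_bit0 fun hn => h (by simpa using hn)
  · exact trNum_bit1 n

theorem primrec_of_apply_bit {σ : Type*} [Primcodable σ] {f : ℕ → σ} {g : Bool → σ → σ}
    (hg : Primrec₂ g) (hf : ∀ b n, Nat.bit b n ≠ 0 → f (Nat.bit b n) = g b (f n)) :
    Primrec f := by
  have hf' (n : ℕ) (hn : n ≠ 0) : f n = g n.bodd (f n.div2) := by
    simpa only [Nat.bit_bodd_div2] using hf n.bodd n.div2 (n.bit_bodd_div2.symm ▸ hn)
  have hrec : Primrec₂ fun (_ : Unit) n => f n := by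
    refine Primrec.nat_strong_rec _ (g := fun _ l =>
      if l.length = 0 then some (f 0) else l[l.length.div2]?.map (g l.length.bodd)) ?_ ?_
    · have hlength : Primrec fun p : Unit × List σ => p.2.length :=
        Primrec.list_length.comp Primrec.snd
      refine Primrec.ite (Primrec.eq.comp hlength (Primrec.const 0)) (Primrec.const _) ?_
      exact Primrec.option_map (Primrec.list_getElem?.comp Primrec.snd
        (Primrec.nat_div2.comp hlength)) (hg.comp
          (Primrec.nat_bodd.comp (hlength.comp Primrec.fst)) Primrec.snd)
    · intro _ n
      obtain rfl | hn := eq_or_ne n 0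
      · simp
      · have hlt : n.div2 < n := by
          rw [Nat.div2_val]
          omega
        simp [hn, hlt, ← hf' n hn]
  exact hrec.comp (Primrec.const ()) Primrec.id

theorem primrec_map_trNat {σ : Type*} [Primcodable σ] (s : Γ' → σ) :
    Primrec fun n => (trNat n).map s := by
  refine primrec_of_apply_bit (g := fun b l => cond b (s .bit1) (s .bit0) :: l) ?_ fun b n h => ?_
  · exact Primrec.list_cons.comp (Primrec.cond Primrec.fst (Primrec.const _) (Primrec.const _))
      Primrec.snd
  · rw [trNat_bit h]
    cases b <;> rfl

theorem primrec_map_trInit {σ : Type*} [Primcodable σ] (s : TM2to1.Γ' K' (fun _ => Γ') → σ) :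
    Primrec fun n => (TM2to1.trInit K'.main (trList [n])).map s := by
  let symbol (b : Bool) (a : Γ') : TM2to1.Γ' K' (fun _ => Γ') :=
    (b, Function.update (fun _ => none) K'.main (some a))
  have htrInit (n : ℕ) : TM2to1.trInit K'.main (trList [n]) =
      symbol true .cons :: (trNat n).reverse.map (symbol false) := by
    rw [TM2to1.trInit, show (trList [n]).reverse = Γ'.cons :: (trNat n).reverse by simp [trList]]
    rfl
  refine (Primrec.list_cons.comp (Primrec.const (s (symbol true .cons)))
    (Primrec.list_reverse.comp (primrec_map_trNat (s ∘ symbol false)))).of_eq fun n => ?_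
  rw [htrInit, List.map_cons, List.map_map, List.map_reverse]

instance : Finite K' :=
  .of_surjective ![K'.main, K'.rev, K'.aux, K'.stack] fun
    | .main => ⟨0, rfl⟩
    | .rev => ⟨1, rfl⟩
    | .aux => ⟨2, rfl⟩
    | .stack => ⟨3, rfl⟩

instance : Finite (TM2to1.Γ' K' fun _ => Γ') :=
  inferInstanceAs (Finite (Bool × (K' → Option Γ')))

instance : Nontrivial (TM2to1.Γ' K' fun _ => Γ') :=
  inferInstanceAs (Nontrivial (Bool × (K' → Option Γ')))

theorem exists_machine_not_computablePred_eval_dom :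
    ∃ (m Q : ℕ) (_ : NeZero m) (_ : NeZero Q) (M : TM0.Machine (Fin m) (Fin Q)),
      1 < m ∧ ¬ ComputablePred fun l => (TM0.eval M l).Dom := by
  obtain ⟨Λ, _, M, S, hS, hM⟩ := exists_machine_eval_dom_iff
    (Nat.Partrec.Code.eval_part.comp (Computable.ofNat Nat.Partrec.Code) (Computable.const 0))
  obtain ⟨m, Q, _, _, f, M', hM'⟩ := exists_fin_machine M hS
  refine ⟨m, Q, inferInstance, inferInstance, M', Fin.nontrivial_iff_two_le.1 f.symm.nontrivial,
    fun hcomp => ComputablePred.halting_problem 0 ?_⟩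
  refine ComputablePred.computable_of_manyOneReducible
    ⟨_, ((primrec_map_trInit f).comp Primrec.encode).to_comp, fun c => ?_⟩ hcomp
  rw [hM', hM, Denumerable.ofNat_encode]

end UniversalMachine

/-! ### Primitive recursive words -/

section Words

variable {α β : Type*} [Primcodable α] [Primcodable β]

/-- A family of elements of a free group which can be written as words depending primitive
recursively on the parameter. -/
def HasPrimrecWord (f : β → FreeGroup α) : Prop :=
  ∃ w : β → List (α × Bool), Primrec w ∧ ∀ b, FreeGroup.mk (w b) = f b

namespace HasPrimrecWord

theorem const (g : FreeGroup α) : HasPrimrecWord fun _ : β => g :=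
  let ⟨w, hw⟩ := Quot.exists_rep g
  ⟨fun _ => w, Primrec.const w, fun _ => hw⟩

theorem mul {f g : β → FreeGroup α} : HasPrimrecWord f → HasPrimrecWord g →
    HasPrimrecWord fun b => f b * g b := by
  rintro ⟨u, hu, hf⟩ ⟨w, hw, hg⟩
  exact ⟨fun b => u b ++ w b, Primrec.list_append.comp hu hw, fun b => by
    rw [← FreeGroup.mul_mk, hf, hg]⟩

theorem inv {f : β → FreeGroup α} : HasPrimrecWord f → HasPrimrecWord fun b => (f b)⁻¹ := by
  rintro ⟨w, hw, hf⟩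
  have hflip : Primrec₂ fun (_ : List (α × Bool)) (p : α × Bool) => (p.1, !p.2) :=
    Primrec.pair (Primrec.fst.comp Primrec.snd)
      (Primrec.not.comp (Primrec.snd.comp Primrec.snd))
  have hinvRev : Primrec (FreeGroup.invRev : List (α × Bool) → List (α × Bool)) :=
    Primrec.list_reverse.comp (Primrec.list_map Primrec.id hflip)
  exact ⟨fun b => FreeGroup.invRev (w b), hinvRev.comp hw, fun b => by
    rw [← FreeGroup.inv_mk, hf]⟩

theorem pow (g : FreeGroup α) {n : β → ℕ} (hn : Primrec n) :
    HasPrimrecWord fun b => g ^ n b := by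
  obtain ⟨w, rfl⟩ : ∃ w, FreeGroup.mk w = g := Quot.exists_rep g
  have hmk (k : ℕ) : FreeGroup.mk ((w ++ ·)^[k] []) = FreeGroup.mk w ^ k := by
    induction k with
    | zero => rfl
    | succ k ih => rw [iterate_succ_apply', ← FreeGroup.mul_mk, ih, pow_succ']
  exact ⟨fun b => (w ++ ·)^[n b] [], Primrec.nat_iterate hn (Primrec.const [])
    (Primrec.list_append.comp (Primrec.const w) Primrec.snd), fun b => hmk (n b)⟩

theorem commutator {f g : β → FreeGroup α} (hf : HasPrimrecWord f) (hg : HasPrimrecWord g) :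
    HasPrimrecWord fun b => ⁅f b, g b⁆ :=
  ((hf.mul hg).mul hf.inv).mul hg.inv

theorem lampAt_natCast {ι : Type*} (γ : Generator ι → FreeGroup α) (p : ℤ) {q : β → ℕ}
    (hq : Primrec q) : HasPrimrecWord fun b => lampAt γ (p, q b) := by
  have hshift : HasPrimrecWord fun b => shift γ (p, q b) := by
    simpa only [shift, zpow_natCast] using (const (γ x ^ p)).mul (pow (γ y) hq)
  exact (hshift.mul (const (γ t))).mul hshift.inv

end HasPrimrecWord

theorem primrec_halfTapeCode_mk {m : ℕ} [NeZero m] :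
    Primrec fun l : List (Fin m) => halfTapeCode (.mk l) := by
  have hfoldr : Primrec fun l : List (Fin m) => l.foldr (fun a c => a.val + m * c) 0 := by
    refine Primrec.list_foldr (h := fun _ (p : Fin m × ℕ) => p.1.val + m * p.2) Primrec.id
      (Primrec.const 0) ?_
    exact Primrec.nat_add.comp (Primrec.fin_val.comp (Primrec.fst.comp Primrec.snd))
      (Primrec.nat_mul.comp (Primrec.const m) (Primrec.snd.comp Primrec.snd))
  refine hfoldr.of_eq fun l => ?_
  rw [halfTapeCode_mk, Nat.ofDigits_eq_foldr, List.foldr_map]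
  rfl

end Words

end NovikovBoone

open NovikovBoone

/-!
Novikov (1955), Boone (1959): there exists a finitely presented group with
unsolvable word problem.  Elements of the free group are effectively encoded by
the words (lists of generators and formal inverses) representing them; a word
`w` represents the identity of the presented group `⟨Fin n ∣ R⟩` exactly when
`FreeGroup.mk w` lies in the normal closure of `R`.
-/
theorem novikov_boone :
    ∃ (n : ℕ) (R : Finset (FreeGroup (Fin n))),
      ¬ ComputablePred (fun w : List (Fin n × Bool) =>
          FreeGroup.mk w ∈ Subgroup.normalClosure (R : Set (FreeGroup (Fin n)))) := by
  obtain ⟨m, Q, _, _, M, hm, hM⟩ := exists_machine_not_computablePred_eval_dom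
  obtain ⟨n, ⟨e⟩⟩ := Finite.exists_equiv_fin (Generator (Option (Fin Q) × Fin m × Fin m))
  have hfin := finite_relators (machineSystem M) 0 (FreeGroup.of ∘ e)
  obtain ⟨w, hw, hmk⟩ := (HasPrimrecWord.const (FreeGroup.of (e .k))).commutator
    (.lampAt_natCast (FreeGroup.of ∘ e) 1 (primrec_halfTapeCode_mk (m := m)))
  refine ⟨n, hfin.toFinset, fun hR => hM ?_⟩
  refine ComputablePred.computable_of_manyOneReducible ⟨w, hw.to_comp, fun l => ?_⟩ hR
  rw [hmk, hfin.coe_toFinset, commutator_mem_normalClosure_relators_iff, eqvGen_init_iff M hm]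
end

section
/- Kuznetsov's theorem: Let n be a natural number and R a finite set of elements of FreeGroup (Fin n). If the presented group G = ⟨Fin n ∣ R⟩ (the quotient of FreeGroup (Fin n) by the normal closure of R) is a simple group, then membership in the normal closure of R is a computable predicate; that is, every finitely presented simple group has solvable word problem. -/
/-!
Let `N` be the normal closure of the relators `R`, and fix `x ∉ N`. If the quotient by `N` is
simple, then adding any further relator `g ∉ N` collapses it, so `g ∉ N` if and only if `x` lies in
the normal closure of `R ∪ {g}`. A normal closure consists of the products of conjugates of relators
and their inverses, hence is recursively enumerable, uniformly in the relators. So `N` and its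
complement are both recursively enumerable, and Post's theorem applies.
-/

section RecursivelyEnumerable

open Nat.Partrec (Code)
open Encodable Filter

variable {α β : Type*} [Primcodable α] [Primcodable β]

theorem rePred_comp {p : β → Prop} {f : α → β} (hp : REPred p) (hf : Computable f) :
    REPred fun a => p (f a) :=
  Partrec.comp (f := fun b => Part.assert (p b) fun _ => Part.some ()) hp hf

theorem rePred_exists_of_primrecRel {r : α → β → Prop} (hr : PrimrecRel r) :
    REPred fun a => ∃ b, r a b := by
  classical
  have hsearch : Primrec₂ fun (a : α) (k : ℕ) =>
      (decode (α := β) k).bind fun b => if r a b then some () else none :=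
    Primrec.option_bind (Primrec.decode.comp Primrec.snd)
      (Primrec.ite (hr.comp (Primrec.fst.comp Primrec.fst) Primrec.snd)
        (Primrec.const _) (Primrec.const _)).to₂
  refine (Partrec.rfindOpt hsearch.to_comp).dom_re.of_eq fun a => Nat.rfindOpt_dom.trans ?_
  simp only [Option.mem_def, Option.bind_eq_some_iff, Option.ite_none_right_eq_some]
  exact ⟨fun ⟨_, _, b, _, hb, _⟩ => ⟨b, hb⟩,
    fun ⟨b, hb⟩ => ⟨encode b, (), b, encodek b, hb, trivial⟩⟩

/-- Kleene's normal form: `k` is a number of steps after which a program for `p` halts. -/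
theorem exists_primrecRel_of_rePred {p : α → Prop} (hp : REPred p) :
    ∃ r : α → ℕ → Prop, PrimrecRel r ∧ ∀ a, p a ↔ ∃ k, r a k := by
  obtain ⟨c, hc⟩ := Code.exists_code.1 hp
  refine ⟨fun a k => (Code.evaln k c (encode a)).isSome = true, ?_, fun a => ?_⟩
  · exact Primrec.eq.comp (Primrec.option_isSome.comp (Code.primrec_evaln.comp
      ((Primrec.snd.pair (Primrec.const c)).pair (Primrec.encode.comp Primrec.fst))))
      (Primrec.const true)
  · have hdom : p a ↔ (c.eval (encode a)).Dom := by simp [hc, Part.assert]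
    simp only [hdom, Part.dom_iff_mem, Code.evaln_complete, Option.isSome_iff_exists,
      Option.mem_def]
    exact exists_comm

theorem rePred_and {p q : α → Prop} (hp : REPred p) (hq : REPred q) :
    REPred fun a => p a ∧ q a := by
  obtain ⟨r, hr, hpr⟩ := exists_primrecRel_of_rePred hp
  obtain ⟨s, hs, hqs⟩ := exists_primrecRel_of_rePred hq
  have hrs : PrimrecRel fun (a : α) (k : ℕ × ℕ) => r a k.1 ∧ s a k.2 :=
    (hr.comp Primrec.fst (Primrec.fst.comp Primrec.snd)).and
      (hs.comp Primrec.fst (Primrec.snd.comp Primrec.snd))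
  refine (rePred_exists_of_primrecRel hrs).of_eq fun a => ?_
  rw [hpr, hqs, Prod.exists, exists_and_exists_comm]

theorem rePred_or {p q : α → Prop} (hp : REPred p) (hq : REPred q) :
    REPred fun a => p a ∨ q a := by
  obtain ⟨r, hr, hpr⟩ := exists_primrecRel_of_rePred hp
  obtain ⟨s, hs, hqs⟩ := exists_primrecRel_of_rePred hq
  have hrs : PrimrecRel fun (a : α) (k : ℕ) => r a k ∨ s a k := PrimrecPred.or hr hs
  refine (rePred_exists_of_primrecRel hrs).of_eq fun a => ?_
  rw [hpr, hqs, exists_or]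

theorem rePred_exists {p : α × β → Prop} (hp : REPred p) : REPred fun a => ∃ b, p (a, b) := by
  obtain ⟨r, hr, hpr⟩ := exists_primrecRel_of_rePred hp
  have hr' : PrimrecRel fun (a : α) (y : β × ℕ) => r (a, y.1) y.2 :=
    hr.comp (Primrec.fst.pair (Primrec.fst.comp Primrec.snd)) (Primrec.snd.comp Primrec.snd)
  refine (rePred_exists_of_primrecRel hr').of_eq fun a => ?_
  simp only [Prod.exists, ← hpr]

theorem rePred_forall_mem_list {p : α × β → Prop} (hp : REPred p) :
    REPred fun x : α × List β => ∀ b ∈ x.2, p (x.1, b) := by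
  obtain ⟨r, hr, hpr⟩ := exists_primrecRel_of_rePred hp
  have hlt : PrimrecRel fun (b : β) (y : α × ℕ) => ∃ k ∈ List.range y.2, r (y.1, b) k :=
    hr.swap.exists_mem_list.comp (Primrec.list_range.comp (Primrec.snd.comp Primrec.snd))
      ((Primrec.fst.comp Primrec.snd).pair Primrec.fst)
  have hall : PrimrecRel fun (x : α × List β) (K : ℕ) =>
      ∀ b ∈ x.2, ∃ k ∈ List.range K, r (x.1, b) k :=
    hlt.forall_mem_list.comp (Primrec.snd.comp Primrec.fst)
      ((Primrec.fst.comp Primrec.fst).pair Primrec.snd)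
  refine (rePred_exists_of_primrecRel hall).of_eq fun ⟨a, l⟩ => ⟨?_, fun h => ?_⟩
  · rintro ⟨K, hK⟩ b hb
    obtain ⟨k, -, hk⟩ := hK b hb
    exact (hpr (a, b)).2 ⟨k, hk⟩
  · have hbound : ∀ b ∈ l, ∀ᶠ K in atTop, ∃ k ∈ List.range K, r (a, b) k := fun b hb => by
      obtain ⟨k, hk⟩ := (hpr (a, b)).1 (h b hb)
      exact (eventually_gt_atTop k).mono fun K hK => ⟨k, List.mem_range.2 hK, hk⟩
    exact (l.finite_toSet.eventually_all.2 hbound).exists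

end RecursivelyEnumerable

section SimpleQuotient

variable {G : Type*} [Group G]

theorem eq_top_of_isSimpleGroup_quotient_of_lt {N M : Subgroup G} [N.Normal] [M.Normal]
    [IsSimpleGroup (G ⧸ N)] (hNM : N < M) : M = ⊤ := by
  have hker : (QuotientGroup.mk' N).ker = N := QuotientGroup.ker_mk' N
  have hmap : (M.map (QuotientGroup.mk' N)).Normal :=
    Subgroup.Normal.map ‹_› _ (QuotientGroup.mk'_surjective N)
  rcases hmap.eq_bot_or_eq_top with hbot | htop
  · rw [Subgroup.map_eq_bot_iff, hker] at hbot
    exact absurd hbot hNM.not_ge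
  · rw [← Subgroup.comap_map_eq_self (hker.trans_le hNM.le), htop, Subgroup.comap_top]

theorem notMem_normalClosure_iff_mem_normalClosure_insert {S : Set G}
    [IsSimpleGroup (G ⧸ Subgroup.normalClosure S)] {x : G} (hx : x ∉ Subgroup.normalClosure S)
    (g : G) : g ∉ Subgroup.normalClosure S ↔ x ∈ Subgroup.normalClosure (insert g S) := by
  have hle : Subgroup.normalClosure S ≤ Subgroup.normalClosure (insert g S) :=
    Subgroup.normalClosure_mono (Set.subset_insert g S)
  have hg : g ∈ Subgroup.normalClosure (insert g S) :=
    Subgroup.subset_normalClosure (Set.mem_insert g S)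
  refine ⟨fun hgS => ?_, fun hxg hgS => hx ?_⟩
  · have htop := eq_top_of_isSimpleGroup_quotient_of_lt
      (SetLike.lt_iff_le_and_exists.2 ⟨hle, g, hg, hgS⟩)
    exact htop ▸ Subgroup.mem_top x
  · exact Subgroup.normalClosure_le_normal
      (Set.insert_subset hgS Subgroup.subset_normalClosure) hxg

end SimpleQuotient

section Words

/-- Words in the generators `α`: the pair `(a, true)` is the letter `a` and `(a, false)` its
inverse, as in `FreeGroup.mk`. -/
abbrev Word (α : Type*) : Type _ := List (α × Bool)

variable {α : Type*}

/-- The word for `g r g⁻¹`, where `t = (g, r)` is a pair of words. -/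
def conjugateWord (t : Word α × Word α) : Word α :=
  t.1 ++ t.2 ++ FreeGroup.invRev t.1

theorem mk_conjugateWord (t : Word α × Word α) :
    FreeGroup.mk (conjugateWord t) =
      FreeGroup.mk t.1 * FreeGroup.mk t.2 * (FreeGroup.mk t.1)⁻¹ := by
  rw [conjugateWord, ← FreeGroup.mul_mk, ← FreeGroup.mul_mk, FreeGroup.inv_mk]

theorem mk_flatMap {ι : Type*} (f : ι → Word α) (l : List ι) :
    FreeGroup.mk (l.flatMap f) = (l.map fun i => FreeGroup.mk (f i)).prod := by
  induction l with
  | nil => rfl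
  | cons i l ih => rw [List.flatMap_cons, ← FreeGroup.mul_mk, ih, List.map_cons, List.prod_cons]

theorem exists_mk_conjugateWord_eq {S : Set (FreeGroup α)} {y : FreeGroup α}
    (hy : y ∈ Group.conjugatesOfSet S ∪ (Group.conjugatesOfSet S)⁻¹) :
    ∃ t, FreeGroup.mk t.2 ∈ S ∪ S⁻¹ ∧ FreeGroup.mk (conjugateWord t) = y := by
  obtain ⟨r, hr, hconj⟩ : ∃ r ∈ S ∪ S⁻¹, IsConj r y := by
    rcases hy with hy | hy <;> obtain ⟨r, hr, hconj⟩ := Group.mem_conjugatesOfSet_iff.1 hy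
    · exact ⟨r, .inl hr, hconj⟩
    · exact ⟨r⁻¹, .inr (Set.inv_mem_inv.2 hr), by
        obtain ⟨g, hg⟩ := isConj_iff.1 hconj
        exact isConj_iff.2 ⟨g, by rw [← conj_inv, hg, inv_inv]⟩⟩
  obtain ⟨g, rfl⟩ := isConj_iff.1 hconj
  obtain ⟨v, rfl⟩ := Quot.exists_rep r
  obtain ⟨u, rfl⟩ := Quot.exists_rep g
  exact ⟨(u, v), hr, mk_conjugateWord (u, v)⟩

theorem mem_normalClosure_iff_exists_conjugateWord {S : Set (FreeGroup α)} {x : FreeGroup α} :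
    x ∈ Subgroup.normalClosure S ↔ ∃ c : List (Word α × Word α),
      (∀ t ∈ c, FreeGroup.mk t.2 ∈ S ∪ S⁻¹) ∧ FreeGroup.mk (c.flatMap conjugateWord) = x := by
  constructor
  · intro hx
    rw [Subgroup.normalClosure, ← Subgroup.mem_toSubmonoid, Subgroup.closure_toSubmonoid] at hx
    obtain ⟨l, hl, rfl⟩ := Submonoid.exists_list_of_mem_closure hx
    choose! t ht hty using fun y => exists_mk_conjugateWord_eq (S := S) (y := y)
    refine ⟨l.map t, List.forall_mem_map.2 fun y hy => ht y (hl y hy), ?_⟩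
    have hmap : l.map (fun y => FreeGroup.mk (conjugateWord (t y))) = l :=
      (List.map_congr_left fun y hy => hty y (hl y hy)).trans l.map_id
    rw [mk_flatMap, List.map_map]
    exact congrArg List.prod hmap
  · rintro ⟨c, hc, rfl⟩
    rw [mk_flatMap]
    refine list_prod_mem (List.forall_mem_map.2 fun t ht => ?_)
    rw [mk_conjugateWord]
    refine Subgroup.normalClosure_normal.conj_mem _ ?_ _
    rcases hc t ht with hS | hS
    · exact Subgroup.subset_normalClosure hS
    · exact inv_mem_iff.1 (Subgroup.subset_normalClosure hS)

end Words

section ComputableWords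

variable {α : Type*} [Primcodable α]

theorem primrec_invRev : Primrec (FreeGroup.invRev (α := α)) :=
  Primrec.list_reverse.comp (Primrec.list_map Primrec.id
    ((Primrec.fst.comp Primrec.snd).pair (Primrec.not.comp (Primrec.snd.comp Primrec.snd))))

theorem primrec_conjugateWord : Primrec (conjugateWord (α := α)) :=
  Primrec.list_append.comp (Primrec.list_append.comp Primrec.fst Primrec.snd)
    (primrec_invRev.comp Primrec.fst)

theorem primrec_reduce [DecidableEq α] : Primrec (FreeGroup.reduce (α := α)) := by
  have hcancel : PrimrecRel fun x y : α × Bool => x.1 = y.1 ∧ x.2 = !y.2 :=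
    (Primrec.eq.comp (Primrec.fst.comp Primrec.fst) (Primrec.fst.comp Primrec.snd)).and
      (Primrec.eq.comp (Primrec.snd.comp Primrec.fst)
        (Primrec.not.comp (Primrec.snd.comp Primrec.snd)))
  have hhead : Primrec fun z : (Word α × (α × Bool) × Word α × Word α) ×
      (α × Bool) × Word α => z.1.2.1 :=
    Primrec.fst.comp (Primrec.snd.comp Primrec.fst)
  exact Primrec.list_rec Primrec.id (Primrec.const []) (Primrec.list_casesOn
    (Primrec.snd.comp (Primrec.snd.comp Primrec.snd))
    (Primrec.list_cons.comp (Primrec.fst.comp Primrec.snd) (Primrec.const []))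
    (Primrec.ite (hcancel.comp hhead (Primrec.fst.comp Primrec.snd))
      (Primrec.snd.comp Primrec.snd) (Primrec.list_cons.comp hhead
        (Primrec.list_cons.comp (Primrec.fst.comp Primrec.snd)
          (Primrec.snd.comp Primrec.snd)))).to₂).to₂

theorem primrecRel_mk_eq_mk :
    PrimrecRel fun v w : Word α => FreeGroup.mk v = FreeGroup.mk w := by
  classical
  exact (Primrec.eq.comp (primrec_reduce.comp Primrec.fst) (primrec_reduce.comp Primrec.snd)).of_eq
    fun _ => ⟨FreeGroup.reduce.exact, FreeGroup.reduce.sound⟩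

theorem rePred_mk_mem_of_finite {S : Set (FreeGroup α)} (hS : S.Finite) :
    REPred fun w : Word α => FreeGroup.mk w ∈ S := by
  classical
  refine (primrecRel_mk_eq_mk.exists_mem_list.comp
    (Primrec.const (hS.toFinset.toList.map FreeGroup.toWord))
    Primrec.id).computablePred.to_re.of_eq fun w => ?_
  simp [FreeGroup.mk_toWord]

end ComputableWords

/-- A family of subsets of a free group is uniformly recursively enumerable if the parameters `b`
together with the words representing elements of `S b` form a recursively enumerable set. -/
def UniformlyRE {α β : Type*} [Primcodable α] [Primcodable β] (S : β → Set (FreeGroup α)) : Prop :=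
  REPred fun x : β × Word α => FreeGroup.mk x.2 ∈ S x.1

namespace UniformlyRE

variable {α β γ : Type*} [Primcodable α] [Primcodable β] [Primcodable γ]
  {S T : β → Set (FreeGroup α)}

theorem const {R : Set (FreeGroup α)}
    (hR : REPred fun w : Word α => FreeGroup.mk w ∈ R) :
    UniformlyRE fun _ : β => R :=
  rePred_comp (p := fun w : Word α => FreeGroup.mk w ∈ R) hR Computable.snd

theorem singleton_mk : UniformlyRE fun v : Word α => {FreeGroup.mk v} :=
  (primrecRel_mk_eq_mk.comp Primrec.snd Primrec.fst).computablePred.to_re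

theorem rePred_mem (hS : UniformlyRE S) {f : γ → β} {g : γ → Word α}
    (hf : Computable f) (hg : Computable g) : REPred fun c => FreeGroup.mk (g c) ∈ S (f c) :=
  rePred_comp (p := fun x : β × Word α => FreeGroup.mk x.2 ∈ S x.1) hS (hf.pair hg)

theorem union (hS : UniformlyRE S) (hT : UniformlyRE T) : UniformlyRE fun b => S b ∪ T b :=
  rePred_or hS hT

theorem inv (hS : UniformlyRE S) : UniformlyRE fun b => (S b)⁻¹ :=
  (hS.rePred_mem Computable.fst (primrec_invRev.to_comp.comp Computable.snd)).of_eq fun x => by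
    rw [Set.mem_inv, FreeGroup.inv_mk]

theorem normalClosure (hS : UniformlyRE S) :
    UniformlyRE fun b => (Subgroup.normalClosure (S b) : Set (FreeGroup α)) := by
  have hrelators : REPred fun y : (β × Word α) × (Word α × Word α) =>
      FreeGroup.mk y.2.2 ∈ S y.1.1 ∪ (S y.1.1)⁻¹ :=
    (hS.union hS.inv).rePred_mem (Computable.fst.comp Computable.fst)
      (Computable.snd.comp Computable.snd)
  have hprod : PrimrecRel fun (x : β × Word α) (c : List (Word α × Word α)) =>
      FreeGroup.mk (c.flatMap conjugateWord) = FreeGroup.mk x.2 :=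
    primrecRel_mk_eq_mk.comp
      (Primrec.list_flatMap Primrec.snd (primrec_conjugateWord.comp Primrec.snd).to₂)
      (Primrec.snd.comp Primrec.fst)
  exact (rePred_exists (rePred_and (rePred_forall_mem_list hrelators)
    hprod.computablePred.to_re)).of_eq fun x =>
      (mem_normalClosure_iff_exists_conjugateWord (S := S x.1) (x := FreeGroup.mk x.2)).symm

end UniformlyRE

theorem kuznetsov_general {α : Type*} [Primcodable α] {R : Set (FreeGroup α)}
    (hR : REPred fun w : Word α => FreeGroup.mk w ∈ R)
    (hsimple : IsSimpleGroup (FreeGroup α ⧸ Subgroup.normalClosure R)) :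
    ComputablePred fun w : Word α =>
      FreeGroup.mk w ∈ Subgroup.normalClosure R := by
  obtain ⟨y, hy⟩ := exists_ne (1 : FreeGroup α ⧸ Subgroup.normalClosure R)
  obtain ⟨x, rfl⟩ := QuotientGroup.mk_surjective y
  obtain ⟨v, rfl⟩ := Quot.exists_rep x
  have hv : FreeGroup.mk v ∉ Subgroup.normalClosure R := mt (QuotientGroup.eq_one_iff _).2 hy
  have hmem : UniformlyRE fun _ : Unit => (Subgroup.normalClosure R : Set (FreeGroup α)) :=
    (UniformlyRE.const hR).normalClosure
  have hinsert : UniformlyRE fun w : Word α =>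
      (Subgroup.normalClosure (insert (FreeGroup.mk w) R) : Set (FreeGroup α)) :=
    (UniformlyRE.singleton_mk.union (UniformlyRE.const hR)).normalClosure
  refine ComputablePred.computable_iff_re_compl_re'.2 ⟨?_, ?_⟩
  · exact hmem.rePred_mem (Computable.const ()) Computable.id
  · simp only [notMem_normalClosure_iff_mem_normalClosure_insert hv]
    exact hinsert.rePred_mem Computable.id (Computable.const v)

/-!
Kuznetsov (1958): every finitely presented simple group has solvable word
problem.  Elements of the free group are effectively encoded by the words
(lists of generators and formal inverses) representing them; a word `w`
represents the identity of the presented group `⟨Fin n ∣ R⟩` exactly when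
`FreeGroup.mk w` lies in the normal closure of `R`.
-/
theorem kuznetsov (n : ℕ) (R : Finset (FreeGroup (Fin n)))
    (hsimple : IsSimpleGroup
      (FreeGroup (Fin n) ⧸ Subgroup.normalClosure (R : Set (FreeGroup (Fin n))))) :
    ComputablePred (fun w : List (Fin n × Bool) =>
      FreeGroup.mk w ∈ Subgroup.normalClosure (R : Set (FreeGroup (Fin n)))) := by
  exact kuznetsov_general (rePred_mk_mem_of_finite R.finite_toSet) hsimple
end

section
/- Boone–Higman theorem (easy direction): Let G be a finitely generated group. Suppose there exist a finitely presented group H, a simple subgroup S of H, and an injective group homomorphism from G into S. Then G has solvable word problem: for every n and every surjective homomorphism π : FreeGroup (Fin n) → G, the set {w : FreeGroup (Fin n) | π w = 1} is computable. -/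
/-- A group is finitely presented if it is isomorphic to the quotient of a finitely
generated free group by the normal closure of a finite set of relators. -/
def IsFinitelyPresented (H : Type*) [Group H] : Prop :=
  ∃ (n : ℕ) (R : Finset (FreeGroup (Fin n))),
    Nonempty (H ≃* FreeGroup (Fin n) ⧸ Subgroup.normalClosure (R : Set (FreeGroup (Fin n))))

/-!
By Post's theorem it is enough to enumerate both the words of `G` that are trivial and those that
are not. Write `H = F / ⟪R⟫` and rewrite words of `G` as words of `F`. A word `u` is trivial iff
`u ∈ ⟪R⟫`, and membership in a normal closure is witnessed by an explicit product of conjugates of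
relators. For the complement, fix `s ≠ 1` in the simple group `S`: an element `g` of `S` is
nontrivial iff `s` lies in the normal closure of `g` in `H`, that is, iff `s` becomes trivial once
`u` is added to the relators. So this is again membership in a normal closure.
-/

open Function Set

namespace BooneHigman

section Computability

variable {α β σ : Type*} [Primcodable α] [Primcodable β] [Primcodable σ]

theorem computable_list_foldl {f : α → List β} {g : α → σ} {h : α → σ × β → σ}
    (hf : Computable f) (hg : Computable g) (hh : Computable₂ h) :
    Computable fun a => (f a).foldl (fun s b => h a (s, b)) (g a) := by
  let foldTake (a : α) (k : ℕ) : σ :=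
    Nat.rec (g a) (fun k s => Option.casesOn (f a)[k]? s fun b => h a (s, b)) k
  have foldTake_eq (a : α) (k : ℕ) :
      foldTake a k = ((f a).take k).foldl (fun s b => h a (s, b)) (g a) := by
    induction k with
    | zero => rfl
    | succ k ih =>
      rw [List.take_add_one, List.foldl_append, ← ih]
      simp only [foldTake]
      cases (f a)[k]? <;> rfl
  have step_computable : Computable₂ fun (a : α) (p : ℕ × σ) =>
      (Option.casesOn (f a)[p.1]? p.2 fun b => h a (p.2, b) : σ) :=
    Computable.option_casesOn
      (Computable.list_getElem?.comp (hf.comp .fst) (Computable.fst.comp .snd))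
      (Computable.snd.comp .snd)
      (hh.comp (Computable.fst.comp .fst)
        ((Computable.snd.comp (Computable.snd.comp .fst)).pair .snd))
  refine (Computable.nat_rec (Computable.list_length.comp hf) hg step_computable).of_eq fun a => ?_
  exact (foldTake_eq a _).trans (by rw [List.take_length])

theorem computable_list_flatMap {f : α → List β} {g : α → β → List σ}
    (hf : Computable f) (hg : Computable₂ g) : Computable fun a => (f a).flatMap (g a) :=
  (computable_list_foldl hf (Computable.const [])
    (Computable.list_append.comp (Computable.fst.comp .snd)
      (hg.comp .fst (Computable.snd.comp .snd))).to₂).of_eq fun a => by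
    rw [List.flatMap_eq_foldl]

theorem rePred_exists {p : α × β → Prop} (hp : ComputablePred p) :
    REPred fun a => ∃ b, p (a, b) := by
  obtain ⟨f, f_computable, rfl⟩ := ComputablePred.computable_iff.1 hp
  let search (a : α) (k : ℕ) : Option β :=
    (Encodable.decode k).bind fun b => bif f (a, b) then some b else none
  have search_computable : Computable₂ search :=
    Computable.option_bind (Computable.decode.comp .snd)
      (Computable.cond (f_computable.comp ((Computable.fst.comp .fst).pair .snd))
        (Computable.option_some.comp .snd) (Computable.const none)).to₂
  refine (Partrec.rfindOpt search_computable).dom_re.of_eq fun a => ?_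
  rw [Nat.rfindOpt_dom]
  constructor
  · rintro ⟨k, b, hb⟩
    obtain ⟨c, -, hc⟩ := Option.bind_eq_some_iff.1 hb
    exact ⟨c, by cases hfc : f (a, c) <;> simp_all⟩
  · rintro ⟨b, hb⟩
    exact ⟨Encodable.encode b, b, by simp [search, hb]⟩

end Computability

section Words

/-- Words in the letters `α` and their formal inverses, which represent the elements of
`FreeGroup α`. The letter `(a, true)` stands for `a` and `(a, false)` for its inverse. -/
abbrev Word (α : Type*) := List (α × Bool)

variable {α β ι γ : Type*}

/-- Substitution of the word `v b` for each letter `b`. On represented elements it is the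
homomorphism `FreeGroup β →* FreeGroup α` induced by `v`. -/
def substWord (v : β → Word α) (w : Word β) : Word α :=
  w.flatMap fun x => bif x.2 then v x.1 else FreeGroup.invRev (v x.1)

theorem mk_substWord (v : β → Word α) (w : Word β) :
    FreeGroup.mk (substWord v w) = FreeGroup.lift (fun b => FreeGroup.mk (v b)) (.mk w) := by
  induction w with
  | nil => rfl
  | cons x w ih =>
    have hcons : substWord v (x :: w) =
        (bif x.2 then v x.1 else FreeGroup.invRev (v x.1)) ++ substWord v w := rfl
    rw [hcons, ← FreeGroup.mul_mk, ih, FreeGroup.lift_mk, FreeGroup.lift_mk, List.map_cons,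
      List.prod_cons]
    cases x.2 <;> rfl

/-- The word `g r g⁻¹` for the conjugator `g` and the relator `r` indexed by `p = (g, i)`. -/
def conjWord (r : ι → Word α) (p : Word α × ι) : Word α :=
  p.1 ++ r p.2 ++ FreeGroup.invRev p.1

theorem mk_conjWord (r : ι → Word α) (p : Word α × ι) :
    FreeGroup.mk (conjWord r p) =
      FreeGroup.mk p.1 * FreeGroup.mk (r p.2) * (FreeGroup.mk p.1)⁻¹ := by
  rw [FreeGroup.inv_mk, FreeGroup.mul_mk, FreeGroup.mul_mk, conjWord]

/-- Multiplication of a reduced word by a letter on the left, followed by free reduction. -/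
def consReduce [DecidableEq α] (x : α × Bool) (l : Word α) : Word α :=
  List.casesOn l [x] fun hd tl => if x = (hd.1, !hd.2) then tl else x :: hd :: tl

theorem reduce_eq_foldr_consReduce [DecidableEq α] (l : Word α) :
    FreeGroup.reduce l = l.foldr consReduce [] := by
  induction l with
  | nil => rfl
  | cons x l ih =>
    rw [FreeGroup.reduce.cons, List.foldr_cons, ← ih]
    cases FreeGroup.reduce l <;> simp [consReduce, Prod.ext_iff]

variable [Primcodable α] [Primcodable β] [Primcodable ι] [Primcodable γ]

theorem primrec_invRev : Primrec (FreeGroup.invRev : Word α → Word α) :=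
  Primrec.list_reverse.comp <| Primrec.list_map Primrec.id
    ((Primrec.fst.comp .snd).pair (Primrec.not.comp (Primrec.snd.comp .snd))).to₂

theorem computable_substWord {v : γ → β → Word α} (hv : Computable₂ v) :
    Computable₂ fun c w => substWord (v c) w := by
  have letter_image : Computable₂ fun (p : γ × Word β) (x : β × Bool) => v p.1 x.1 :=
    hv.comp (Computable.fst.comp .fst) (Computable.fst.comp .snd)
  exact computable_list_flatMap Computable.snd
    (Computable.cond (Computable.snd.comp .snd) letter_image
      (primrec_invRev.to_comp.comp letter_image))

theorem computable_conjWord {r : γ → ι → Word α} (hr : Computable₂ r) :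
    Computable₂ fun c p => conjWord (r c) p := by
  have conjugator : Computable fun x : γ × (Word α × ι) => x.2.1 := Computable.fst.comp .snd
  exact Computable.list_append.comp
    (Computable.list_append.comp conjugator (hr.comp .fst (Computable.snd.comp .snd)))
    (primrec_invRev.to_comp.comp conjugator)

theorem primrec_consReduce [DecidableEq α] :
    Primrec₂ (consReduce : α × Bool → Word α → Word α) := by
  have letter : Primrec fun q : ((α × Bool) × Word α) × ((α × Bool) × Word α) => q.1.1 :=
    Primrec.fst.comp .fst
  have head : Primrec fun q : ((α × Bool) × Word α) × ((α × Bool) × Word α) => q.2.1 :=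
    Primrec.fst.comp .snd
  have tail : Primrec fun q : ((α × Bool) × Word α) × ((α × Bool) × Word α) => q.2.2 :=
    Primrec.snd.comp .snd
  exact Primrec.list_casesOn Primrec.snd (Primrec.list_cons.comp .fst (Primrec.const []))
    (Primrec.ite
      (Primrec.eq.comp letter ((Primrec.fst.comp head).pair (Primrec.not.comp
        (Primrec.snd.comp head))))
      tail (Primrec.list_cons.comp letter (Primrec.list_cons.comp head tail))).to₂

theorem primrec_reduce [DecidableEq α] : Primrec (FreeGroup.reduce : Word α → Word α) :=
  (Primrec.list_foldr Primrec.id (Primrec.const [])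
    (primrec_consReduce.comp (Primrec.fst.comp .snd) (Primrec.snd.comp .snd)).to₂).of_eq
    fun l => (reduce_eq_foldr_consReduce l).symm

theorem computablePred_mk_eq_mk {u v : γ → Word α} (hu : Computable u) (hv : Computable v) :
    ComputablePred fun c => FreeGroup.mk (u c) = FreeGroup.mk (v c) := by
  classical
  have reduce_computable := (primrec_reduce (α := α)).to_comp
  have reduce_eq : ComputablePred fun c => FreeGroup.reduce (u c) = FreeGroup.reduce (v c) :=
    (Primrec.eq.decide.to_comp.comp (reduce_computable.comp hu)
      (reduce_computable.comp hv)).computablePred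
  refine reduce_eq.of_eq fun c => ?_
  rw [← FreeGroup.toWord_mk, ← FreeGroup.toWord_mk, FreeGroup.toWord_inj]

end Words

section NormalClosure

theorem normalClosure_range_eq_closure {G ι : Type*} [Group G] (f : ι → G) :
    Subgroup.normalClosure (range f) =
      Subgroup.closure (range fun p : G × ι => p.1 * f p.2 * p.1⁻¹) := by
  rw [Subgroup.normalClosure]
  congr 1
  ext x
  simp only [Group.mem_conjugatesOfSet_iff, isConj_iff, mem_range,
    exists_exists_eq_and, Prod.exists]
  exact exists_comm

/-- The witness `c` is itself a group word, whose letters `(g, i)` stand for the conjugate by `g` of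
the relator `i`; evaluating it is a substitution. -/
theorem mem_normalClosure_range_mk_iff {α ι : Type*} (r : ι → Word α) (x : FreeGroup α) :
    x ∈ Subgroup.normalClosure (range fun i => FreeGroup.mk (r i)) ↔
      ∃ c : Word (Word α × ι), FreeGroup.mk (substWord (conjWord r) c) = x := by
  have range_conj : (range fun p : Word α × ι => FreeGroup.mk (conjWord r p)) =
      range fun p : FreeGroup α × ι => p.1 * FreeGroup.mk (r p.2) * p.1⁻¹ := by
    simp only [mk_conjWord]
    exact (Surjective.prodMap Quot.mk_surjective surjective_id).range_comp
      fun p : FreeGroup α × ι => p.1 * FreeGroup.mk (r p.2) * p.1⁻¹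
  rw [normalClosure_range_eq_closure, ← range_conj, ← FreeGroup.range_lift_eq_closure,
    MonoidHom.mem_range]
  simp only [mk_substWord]
  exact Quot.mk_surjective.exists

theorem rePred_mem_normalClosure {α ι γ : Type*} [Primcodable α] [Primcodable ι] [Primcodable γ]
    {r : γ → ι → Word α} {u : γ → Word α} (hr : Computable₂ r) (hu : Computable u) :
    REPred fun c =>
      FreeGroup.mk (u c) ∈ Subgroup.normalClosure (range fun i => FreeGroup.mk (r c i)) := by
  have product_eq : ComputablePred fun x : γ × Word (Word α × ι) =>
      FreeGroup.mk (substWord (conjWord (r x.1)) x.2) = FreeGroup.mk (u x.1) :=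
    computablePred_mk_eq_mk (computable_substWord (computable_conjWord hr)) (hu.comp .fst)
  exact (rePred_exists product_eq).of_eq fun c =>
    (mem_normalClosure_range_mk_iff (r c) (.mk (u c))).symm

theorem map_mem_normalClosure_image_iff {K H : Type*} [Group K] [Group H] {q : K →* H}
    (hq : Surjective q) {R : Set K} (hker : q.ker = Subgroup.normalClosure R) (T : Set K) (x : K) :
    q x ∈ Subgroup.normalClosure (q '' T) ↔ x ∈ Subgroup.normalClosure (T ∪ R) := by
  rw [← Subgroup.map_normalClosure _ _ hq, ← Subgroup.mem_comap, Subgroup.comap_map_eq, hker,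
    ← Subgroup.normalClosure_union]

theorem ne_one_iff_mem_normalClosure_singleton {H : Type*} [Group H] {S : Subgroup H}
    [IsSimpleGroup S] {s : S} (hs : s ≠ 1) (g : S) :
    g ≠ 1 ↔ (s : H) ∈ Subgroup.normalClosure {(g : H)} := by
  constructor
  · intro hg
    have trace_normal : ((Subgroup.normalClosure {(g : H)}).subgroupOf S).Normal := inferInstance
    have g_mem : g ∈ (Subgroup.normalClosure {(g : H)}).subgroupOf S :=
      Subgroup.mem_subgroupOf.2 (Subgroup.subset_normalClosure rfl)
    rcases trace_normal.eq_bot_or_eq_top with trace_eq | trace_eq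
    · exact absurd (Subgroup.mem_bot.1 (trace_eq ▸ g_mem)) hg
    · exact Subgroup.mem_subgroupOf.1 (trace_eq ▸ Subgroup.mem_top s)
  · rintro s_mem rfl
    have closure_one : Subgroup.normalClosure {((1 : S) : H)} = ⊥ :=
      Subgroup.normalClosure_eq_bot_iff.2 subset_rfl
    rw [closure_one, Subgroup.mem_bot, OneMemClass.coe_eq_one] at s_mem
    exact hs s_mem

end NormalClosure

section Presentations

/-- A group is recursively presented if it has a presentation with finitely many generators and a
recursively enumerable set of relators. The relators are given as the values of a computable
family `r` of words; the index type `ι` may be empty or finite. -/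
def IsRecursivelyPresented (H : Type*) [Group H] : Prop :=
  ∃ (m : ℕ) (ι : Type) (_ : Primcodable ι) (r : ι → Word (Fin m)) (q : FreeGroup (Fin m) →* H),
    Computable r ∧ Surjective q ∧
      q.ker = Subgroup.normalClosure (range fun i => FreeGroup.mk (r i))

theorem isRecursivelyPresented_of_isFinitelyPresented {H : Type*} [Group H]
    (hH : IsFinitelyPresented H) : IsRecursivelyPresented H := by
  obtain ⟨m, R, ⟨e⟩⟩ := hH
  refine ⟨m, Fin R.toList.length, inferInstance, fun i => (R.toList.get i).toWord,
    e.symm.toMonoidHom.comp (QuotientGroup.mk' _), (Primrec.dom_finite _).to_comp,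
    e.symm.surjective.comp (QuotientGroup.mk'_surjective _), ?_⟩
  have range_relators : (range fun i => FreeGroup.mk (R.toList.get i).toWord) = R := by
    simp only [FreeGroup.mk_toWord, range_list_get, Finset.mem_toList, Finset.setOfPred_mem]
  rw [range_relators]
  ext x
  simp

theorem exists_computable_word_lift {α β H : Type*} [Finite α] [Primcodable α] [Primcodable β]
    [Group H] {q : FreeGroup β →* H} (hq : Surjective q) (ψ : FreeGroup α →* H) :
    ∃ u : Word α → Word β, Computable u ∧ ∀ w, q (.mk (u w)) = ψ (.mk w) := by
  classical
  choose f hf using fun a => hq (ψ (.of a))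
  refine ⟨substWord fun a => (f a).toWord, ?_, fun w => ?_⟩
  · have letters_computable : Computable₂ fun (_ : Unit) a => (f a).toWord :=
      ((Primrec.dom_finite fun a => (f a).toWord).comp .snd).to_comp
    exact (computable_substWord letters_computable).comp (Computable.const ()) .id
  · have lift_eq : q.comp (FreeGroup.lift f) = ψ := FreeGroup.ext_hom _ _ fun a => by simp [hf]
    simp only [mk_substWord, FreeGroup.mk_toWord, ← lift_eq, MonoidHom.comp_apply]

theorem rePred_map_mem_normalClosure_singleton {α ι γ H : Type*} [Primcodable α] [Primcodable ι]
    [Primcodable γ] [Group H] {r : ι → Word α} {q : FreeGroup α →* H} (hr : Computable r)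
    (hq : Surjective q) (hker : q.ker = Subgroup.normalClosure (range fun i => .mk (r i)))
    {u v : γ → Word α} (hu : Computable u) (hv : Computable v) :
    REPred fun c => q (.mk (v c)) ∈ Subgroup.normalClosure {q (.mk (u c))} := by
  have relators_computable : Computable₂ fun c (o : Option ι) => o.elim (u c) r :=
    (Computable.option_casesOn .snd (hu.comp .fst) (hr.comp .snd).to₂).of_eq
      fun ⟨_, o⟩ => by cases o <;> rfl
  refine (rePred_mem_normalClosure relators_computable hv).of_eq fun c => ?_
  rw [← image_singleton, map_mem_normalClosure_image_iff hq hker, singleton_union, Option.range_eq]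
  rfl

end Presentations

end BooneHigman

open BooneHigman

theorem boone_higman_easy_direction_general {α H : Type*} [Finite α] [Primcodable α] [Group H]
    (hH : IsRecursivelyPresented H) {S : Subgroup H} [IsSimpleGroup S] (ψ : FreeGroup α →* S) :
    ComputablePred fun w : List (α × Bool) => ψ (FreeGroup.mk w) = 1 := by
  obtain ⟨m, ι, _, r, q, r_computable, q_surjective, ker_q⟩ := hH
  obtain ⟨u, u_computable, q_u⟩ := exists_computable_word_lift q_surjective (S.subtype.comp ψ)
  obtain ⟨s, s_ne_one⟩ := exists_ne (1 : S)
  obtain ⟨t, q_t⟩ := q_surjective s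
  refine ComputablePred.computable_iff_re_compl_re'.2 ⟨?_, ?_⟩
  · refine (rePred_mem_normalClosure (r_computable.comp .snd).to₂ u_computable).of_eq fun w => ?_
    rw [← ker_q, MonoidHom.mem_ker, q_u]
    exact OneMemClass.coe_eq_one
  · refine (rePred_map_mem_normalClosure_singleton r_computable q_surjective ker_q u_computable
      (Computable.const t.toWord)).of_eq fun w => ?_
    rw [FreeGroup.mk_toWord, q_t, q_u]
    exact (ne_one_iff_mem_normalClosure_singleton s_ne_one _).symm

/-!
Boone–Higman (1974), easy direction: if a finitely generated group `G` embeds in a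
simple subgroup of a finitely presented group, then `G` has solvable word problem:
for every `n` and every surjection `π : FreeGroup (Fin n) →* G`, the set of words
representing elements of the kernel of `π` is computable (elements of the free group
being effectively encoded by the words representing them).
-/
theorem boone_higman_easy_direction (G : Type*) [Group G] [Group.FG G]
    (H : Type*) [Group H] (hH : IsFinitelyPresented H)
    (S : Subgroup H) (hS : IsSimpleGroup S)
    (φ : G →* S) (hφ : Function.Injective φ) :
    ∀ (n : ℕ) (π : FreeGroup (Fin n) →* G), Function.Surjective π →
      ComputablePred (fun w : List (Fin n × Bool) => π (FreeGroup.mk w) = 1) :=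
  fun _ π _ => (boone_higman_easy_direction_general
    (isRecursivelyPresented_of_isFinitelyPresented hH) (φ.comp π)).of_eq
    fun _ => map_eq_one_iff φ hφ
end

section
/- Grigorchuk–Nekrashevych–Suschanskiǐ: The rational homeomorphisms of the Cantor space 𝔠 form a subgroup of the homeomorphism group of 𝔠; that is, the identity is rational, the composition of two rational homeomorphisms is rational, and the inverse of a rational homeomorphism is rational. -/
/-- Concatenation of a finite word with an infinite sequence. -/
def wordAppend {A : Type*} (α : List A) (x : ℕ → A) : ℕ → A :=
  fun n => if h : n < α.length then α.get ⟨n, h⟩ else x (n - α.length)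

/-- The cone determined by a finite word: all sequences having it as a prefix. -/
def cone {A : Type*} (α : List A) : Set (ℕ → A) := Set.range (wordAppend α)

/-- `g` is the local action of the homeomorphism `f` at the word `α`:
there is a word `β` with `f (α ⌢ x) = β ⌢ (g x)` for all `x`, and `β` is the longest
common prefix of the image of the cone `C_α` (witnessed by two image points that
differ in the coordinate immediately after `β`). -/
def IsLocalAction {A : Type*} [TopologicalSpace A] (f : (ℕ → A) ≃ₜ (ℕ → A)) (α : List A)
    (g : (ℕ → A) → (ℕ → A)) : Prop :=
  ∃ β : List A, (∀ x, f (wordAppend α x) = wordAppend β (g x)) ∧ ∃ x y, g x 0 ≠ g y 0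

/-- A homeomorphism of a Cantor space of sequences is rational if it has only
finitely many distinct local actions. -/
def IsRational {A : Type*} [TopologicalSpace A] (f : (ℕ → A) ≃ₜ (ℕ → A)) : Prop :=
  {g | ∃ α, IsLocalAction f α g}.Finite

/-!
Removing the longest common prefix from a family of sequences leaves a unique family, and a common
prefix that was added beforehand makes no difference to it. Hence every local action of `g ∘ f`
arises in this way from `ψ ∘ φ`, where `φ` and `ψ` are local actions of `f` and `g`, and there are
only finitely many such pairs.

If `k` is a local action of `f⁻¹`, then some local action `φ` of `f` and some word `δ` satisfy
`φ (k x) = δ⌢x` for all `x`. As `φ` is injective, `k` is determined by `φ` and `δ`. By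
compactness the first letter of a sequence `u` depends only on the first `N` letters of `φ u`, for
some `N`; since the sequences `k x` do not all begin with the same letter, `δ` is shorter than `N`.
-/

local notation:67 α:68 "⌢" x:67 => wordAppend α x

variable {A X : Type*}

section WordAppend

theorem wordAppend_apply_of_lt {α : List A} {n : ℕ} (hn : n < α.length) (x : ℕ → A) :
    (α⌢x) n = α[n] := by
  simp [wordAppend, hn]

theorem wordAppend_apply_length_add (α : List A) (x : ℕ → A) (n : ℕ) :
    (α⌢x) (α.length + n) = x n := by
  simp [wordAppend]

theorem nil_wordAppend (x : ℕ → A) : []⌢x = x := by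
  funext n
  simp [wordAppend]

theorem wordAppend_injective (α : List A) : Function.Injective (wordAppend α) := by
  intro x y hxy
  funext n
  rw [← wordAppend_apply_length_add α x n, hxy, wordAppend_apply_length_add]

theorem cons_wordAppend_succ (a : A) (α : List A) (x : ℕ → A) (n : ℕ) :
    ((a :: α)⌢x) (n + 1) = (α⌢x) n := by
  simp [wordAppend]

theorem append_wordAppend (α β : List A) (x : ℕ → A) : (α ++ β)⌢x = α⌢β⌢x := by
  induction α with
  | nil => rw [List.nil_append, nil_wordAppend]
  | cons a α ih =>
    funext n
    cases n with
    | zero => rfl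
    | succ n => rw [List.cons_append, cons_wordAppend_succ, cons_wordAppend_succ, ih]

theorem isPrefix_of_wordAppend_eq {α β : List A} {x y : ℕ → A} (h : α⌢x = β⌢y)
    (hlen : α.length ≤ β.length) : α <+: β := by
  refine List.prefix_iff_getElem.mpr ⟨hlen, fun n hn => ?_⟩
  rw [← wordAppend_apply_of_lt hn x, h, wordAppend_apply_of_lt]

theorem continuous_wordAppend [TopologicalSpace A] (α : List A) : Continuous (wordAppend α) := by
  refine continuous_pi fun n => ?_
  by_cases hn : n < α.length
  · simpa only [wordAppend_apply_of_lt hn] using continuous_const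
  · obtain ⟨m, rfl⟩ := Nat.exists_eq_add_of_le (not_lt.mp hn)
    simpa only [wordAppend_apply_length_add] using continuous_apply m

end WordAppend

section CommonPrefix

/-- The longest common prefix of the family of sequences `u` is empty. An empty or one-element
family does not qualify. -/
def NoCommonPrefix (u : X → ℕ → A) : Prop :=
  ∃ x y, u x 0 ≠ u y 0

/-- The family of sequences `k` is obtained from the family `F` by removing its longest common
prefix. The local actions of `f` at `α` are the reductions of the family `x ↦ f (α⌢x)`. -/
def IsPrefixReduction (F k : X → ℕ → A) : Prop :=
  ∃ β : List A, (∀ x, F x = β⌢k x) ∧ NoCommonPrefix k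

variable {F u k k' : X → ℕ → A} {γ β : List A}

theorem noCommonPrefix_id [Nontrivial A] : NoCommonPrefix (id : (ℕ → A) → ℕ → A) := by
  obtain ⟨a, b, hab⟩ := exists_pair_ne A
  exact ⟨fun _ => a, fun _ => b, hab⟩

theorem NoCommonPrefix.nontrivial (hk : NoCommonPrefix k) : Nontrivial A :=
  let ⟨_, _, hxy⟩ := hk
  nontrivial_of_ne _ _ hxy

theorem NoCommonPrefix.length_le (hk : NoCommonPrefix k) (h : ∀ x, γ⌢u x = β⌢k x) :
    γ.length ≤ β.length := by
  obtain ⟨x, y, hxy⟩ := hk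
  by_contra! hlt
  refine hxy ?_
  have head_eq (z : X) : k z 0 = γ[β.length] := by
    rw [← wordAppend_apply_length_add β (k z) 0, ← h z, add_zero, wordAppend_apply_of_lt hlt]
  rw [head_eq x, head_eq y]

theorem NoCommonPrefix.exists_eq_wordAppend (hk : NoCommonPrefix k)
    (h : ∀ x, γ⌢u x = β⌢k x) : ∃ δ : List A, ∀ x, u x = δ⌢k x := by
  have ⟨x₀, _⟩ := hk
  obtain ⟨δ, rfl⟩ := isPrefix_of_wordAppend_eq (h x₀) (hk.length_le h)
  exact ⟨δ, fun x => wordAppend_injective γ <| by rw [h x, append_wordAppend]⟩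

theorem IsPrefixReduction.of_wordAppend (h : IsPrefixReduction (fun x => γ⌢u x) k) :
    IsPrefixReduction u k := by
  obtain ⟨β, hβ, hk⟩ := h
  obtain ⟨δ, hδ⟩ := hk.exists_eq_wordAppend hβ
  exact ⟨δ, hδ, hk⟩

theorem IsPrefixReduction.unique (h : IsPrefixReduction F k) (h' : IsPrefixReduction F k') :
    k = k' := by
  obtain ⟨β, hβ, hk⟩ := h
  obtain rfl : F = fun x => β⌢k x := funext hβ
  obtain ⟨δ, hδ, -⟩ := h'.of_wordAppend
  have hlen : δ.length ≤ ([] : List A).length :=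
    hk.length_le fun x => by rw [nil_wordAppend, ← hδ x]
  obtain rfl : δ = [] := List.length_eq_zero_iff.mp (Nat.le_zero.mp hlen)
  exact funext fun x => by rw [hδ x, nil_wordAppend]

theorem exists_isPrefixReduction {a b : X} (hab : F a ≠ F b) : ∃ k, IsPrefixReduction F k := by
  classical
  have separated : ∃ n, ∃ x y, F x n ≠ F y n :=
    let ⟨n, hn⟩ := Function.ne_iff.mp hab
    ⟨n, a, b, hn⟩
  set N := Nat.find separated
  have agree_of_lt {n : ℕ} (hn : n < N) (x : X) : F x n = F a n := by
    by_contra hne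
    exact Nat.find_min separated hn ⟨x, a, hne⟩
  refine ⟨fun x n => F x (N + n), List.ofFn fun i : Fin N => F a i, fun x => funext fun n => ?_,
    Nat.find_spec separated⟩
  by_cases hn : n < N
  · simpa [wordAppend, hn] using agree_of_lt hn x
  · simp [wordAppend, hn, Nat.add_sub_cancel' (not_lt.mp hn)]

theorem IsPrefixReduction.injective (h : IsPrefixReduction F k) (hF : Function.Injective F) :
    Function.Injective k := by
  obtain ⟨β, hβ, -⟩ := h
  exact fun x y hxy => hF <| by rw [hβ x, hβ y, hxy]

theorem IsPrefixReduction.continuous [TopologicalSpace A] [TopologicalSpace X]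
    (h : IsPrefixReduction F k) (hF : Continuous F) : Continuous k := by
  obtain ⟨β, hβ, -⟩ := h
  have apply_eq (n : ℕ) : (fun x => k x n) = fun x => F x (β.length + n) :=
    funext fun x => by rw [hβ x, wordAppend_apply_length_add]
  exact continuous_pi fun n => apply_eq n ▸ (continuous_apply _).comp hF

end CommonPrefix

section Compactness

theorem exists_forall_lt_apply_eq_imp_eq {B : Type*} [TopologicalSpace A] [T2Space A]
    [TopologicalSpace B] [DiscreteTopology B] [TopologicalSpace X] [CompactSpace X]
    {φ : X → ℕ → A} (hφ : Continuous φ) (hinj : Function.Injective φ)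
    {p : X → B} (hp : Continuous p) :
    ∃ N : ℕ, ∀ u v, (∀ i < N, φ u i = φ v i) → p u = p v := by
  have hcompact : IsCompact {q : X × X | p q.1 ≠ p q.2} :=
    ((isClosed_discrete {b : B × B | b.1 ≠ b.2}).preimage (hp.prodMap hp)).isCompact
  have hopen (i : ℕ) : IsOpen {q : X × X | φ q.1 i ≠ φ q.2 i} :=
    isOpen_ne_fun (by fun_prop) (by fun_prop)
  have hcover : {q : X × X | p q.1 ≠ p q.2} ⊆ ⋃ i, {q : X × X | φ q.1 i ≠ φ q.2 i} := by
    intro q hq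
    obtain ⟨i, hi⟩ := Function.ne_iff.mp (hinj.ne fun h => hq (congrArg p h))
    exact Set.mem_iUnion.mpr ⟨i, hi⟩
  obtain ⟨t, ht⟩ := hcompact.elim_finite_subcover _ hopen hcover
  obtain ⟨N, hN⟩ := t.exists_nat_subset_range
  refine ⟨N, fun u v huv => by_contra fun hne => ?_⟩
  obtain ⟨i, hit, hi⟩ := Set.mem_iUnion₂.mp (ht (show (u, v) ∈ _ from hne))
  exact hi (huv i (Finset.mem_range.mp (hN hit)))

theorem finite_setOf_noCommonPrefix_comp_eq_wordAppend [Finite A] [TopologicalSpace A]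
    [DiscreteTopology A] {φ : (ℕ → A) → ℕ → A} (hφ : Continuous φ)
    (hinj : Function.Injective φ) (u : X → ℕ → A) :
    {k : X → ℕ → A | NoCommonPrefix k ∧ ∃ δ : List A, ∀ x, φ (k x) = δ⌢u x}.Finite := by
  obtain ⟨N, hN⟩ := exists_forall_lt_apply_eq_imp_eq hφ hinj (continuous_apply 0)
  have subsingleton (δ : List A) : {k : X → ℕ → A | ∀ x, φ (k x) = δ⌢u x}.Subsingleton :=
    fun k hk k' hk' => funext fun x => hinj <| by rw [hk x, hk' x]
  refine ((List.finite_length_lt A N).biUnion fun δ _ => (subsingleton δ).finite).subset ?_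
  rintro k ⟨⟨x, y, hxy⟩, δ, hδ⟩
  refine Set.mem_biUnion (show δ.length < N from ?_) hδ
  by_contra! hlen
  refine hxy (hN _ _ fun i hi => ?_)
  rw [hδ, hδ, wordAppend_apply_of_lt (hi.trans_le hlen), wordAppend_apply_of_lt]

end Compactness

section LocalAction

variable [TopologicalSpace A] {f g : (ℕ → A) ≃ₜ (ℕ → A)} {α : List A} {k φ : (ℕ → A) → ℕ → A}

/-- The set of all local actions of `f`, whose finiteness is the rationality of `f`. -/
def localActions (f : (ℕ → A) ≃ₜ (ℕ → A)) : Set ((ℕ → A) → ℕ → A) :=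
  {φ | ∃ α, IsLocalAction f α φ}

theorem isLocalAction_iff_isPrefixReduction :
    IsLocalAction f α φ ↔ IsPrefixReduction (fun x => f (α⌢x)) φ :=
  Iff.rfl

theorem exists_isLocalAction [Nontrivial A] (f : (ℕ → A) ≃ₜ (ℕ → A)) (α : List A) :
    ∃ φ, IsLocalAction f α φ := by
  obtain ⟨x, y, hxy⟩ := exists_pair_ne (ℕ → A)
  exact exists_isPrefixReduction ((f.injective.comp (wordAppend_injective α)).ne hxy)

theorem injective_of_mem_localActions (hφ : φ ∈ localActions f) : Function.Injective φ := by
  obtain ⟨α, hα⟩ := hφ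
  exact (isLocalAction_iff_isPrefixReduction.mp hα).injective
    (f.injective.comp (wordAppend_injective α))

theorem continuous_of_mem_localActions (hφ : φ ∈ localActions f) : Continuous φ := by
  obtain ⟨α, hα⟩ := hφ
  exact (isLocalAction_iff_isPrefixReduction.mp hα).continuous
    (f.continuous.comp (continuous_wordAppend α))

theorem exists_isPrefixReduction_comp_of_mem_localActions_trans
    (hk : k ∈ localActions (f.trans g)) :
    ∃ φ ∈ localActions f, ∃ ψ ∈ localActions g, IsPrefixReduction (ψ ∘ φ) k := by
  obtain ⟨α, β, hβ, hk⟩ := hk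
  have : Nontrivial A := NoCommonPrefix.nontrivial hk
  obtain ⟨φ, γ, hγ, hφ⟩ := exists_isLocalAction f α
  obtain ⟨ψ, δ, hδ, hψ⟩ := exists_isLocalAction g γ
  refine ⟨φ, ⟨α, γ, hγ, hφ⟩, ψ, ⟨γ, δ, hδ, hψ⟩, IsPrefixReduction.of_wordAppend (γ := δ) ?_⟩
  refine ⟨β, fun x => ?_, hk⟩
  calc δ⌢ψ (φ x) = g (γ⌢φ x) := (hδ _).symm
    _ = g (f (α⌢x)) := by rw [hγ]
    _ = β⌢k x := hβ x

theorem exists_comp_eq_wordAppend_of_mem_localActions_symm (hk : k ∈ localActions f.symm) :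
    ∃ φ ∈ localActions f, NoCommonPrefix k ∧ ∃ δ : List A, ∀ x, φ (k x) = δ⌢x := by
  obtain ⟨α, β, hβ, hk⟩ := hk
  have : Nontrivial A := NoCommonPrefix.nontrivial hk
  obtain ⟨φ, γ, hγ, hφ⟩ := exists_isLocalAction f β
  refine ⟨φ, ⟨β, γ, hγ, hφ⟩, hk, noCommonPrefix_id.exists_eq_wordAppend (γ := γ) (β := α) ?_⟩
  intro x
  calc γ⌢φ (k x) = f (β⌢k x) := (hγ _).symm
    _ = f (f.symm (α⌢x)) := by rw [hβ]
    _ = α⌢x := f.apply_symm_apply _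

end LocalAction

namespace IsRational

variable [TopologicalSpace A] {f g : (ℕ → A) ≃ₜ (ℕ → A)}

theorem refl : IsRational (Homeomorph.refl (ℕ → A)) := by
  refine (Set.finite_singleton id).subset ?_
  rintro k ⟨α, β, hβ, hk⟩
  have : Nontrivial A := NoCommonPrefix.nontrivial hk
  have reduction_k : IsPrefixReduction id k := IsPrefixReduction.of_wordAppend ⟨β, hβ, hk⟩
  exact reduction_k.unique ⟨[], fun x => (nil_wordAppend x).symm, noCommonPrefix_id⟩

theorem trans (hf : IsRational f) (hg : IsRational g) : IsRational (f.trans g) := by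
  have finite_reductions (F : (ℕ → A) → ℕ → A) : {k | IsPrefixReduction F k}.Finite :=
    Set.Subsingleton.finite fun _ hk _ hk' => hk.unique hk'
  refine (hf.biUnion fun φ _ => hg.biUnion fun ψ _ => finite_reductions (ψ ∘ φ)).subset ?_
  intro k hk
  obtain ⟨φ, hφ, ψ, hψ, hred⟩ := exists_isPrefixReduction_comp_of_mem_localActions_trans hk
  exact Set.mem_biUnion hφ (Set.mem_biUnion hψ hred)

theorem symm [Finite A] [DiscreteTopology A] (hf : IsRational f) : IsRational f.symm := by
  refine (hf.biUnion fun φ hφ => finite_setOf_noCommonPrefix_comp_eq_wordAppend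
    (continuous_of_mem_localActions hφ) (injective_of_mem_localActions hφ) id).subset ?_
  intro k hk
  obtain ⟨φ, hφ, hφk⟩ := exists_comp_eq_wordAppend_of_mem_localActions_symm hk
  exact Set.mem_biUnion hφ hφk

end IsRational

theorem rational_homeomorphisms_form_a_group_general (A : Type*) [Finite A] [TopologicalSpace A]
    [DiscreteTopology A] :
    IsRational (Homeomorph.refl (ℕ → A)) ∧
    (∀ f g : (ℕ → A) ≃ₜ (ℕ → A), IsRational f → IsRational g → IsRational (f.trans g)) ∧
    (∀ f : (ℕ → A) ≃ₜ (ℕ → A), IsRational f → IsRational f.symm) :=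
  ⟨.refl, fun _ _ hf hg => hf.trans hg, fun _ hf => hf.symm⟩

/-!
Grigorchuk–Nekrashevych–Suschanskiǐ (2000): the rational homeomorphisms of the
Cantor space `ℕ → Bool` form a group under composition: the identity is rational,
the composition of two rational homeomorphisms is rational, and the inverse of a
rational homeomorphism is rational.
-/
theorem rational_homeomorphisms_form_a_group :
    IsRational (Homeomorph.refl (ℕ → Bool)) ∧
    (∀ f g : (ℕ → Bool) ≃ₜ (ℕ → Bool), IsRational f → IsRational g →
      IsRational (f.trans g)) ∧
    (∀ f : (ℕ → Bool) ≃ₜ (ℕ → Bool), IsRational f → IsRational f.symm) := by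
  exact rational_homeomorphisms_form_a_group_general Bool
end

section
/- Belk–Hyde–Matucci: The rational group ℛ, i.e. the group of rational homeomorphisms of the Cantor space 𝔠 under composition, is a simple group. -/
/-- The group of self-homeomorphisms of a topological space, under composition. -/
instance homeoGroup {X : Type*} [TopologicalSpace X] : Group (X ≃ₜ X) where
  mul f g := g.trans f
  one := Homeomorph.refl X
  inv := Homeomorph.symm
  mul_assoc _ _ _ := rfl
  one_mul _ := Homeomorph.ext fun _ => rfl
  mul_one _ := Homeomorph.ext fun _ => rfl
  inv_mul_cancel := Homeomorph.self_trans_symm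

/-!
The rational group acts extremely proximally on sequences: any proper closed set can be compressed
into any cone. For such an action, if `h ≠ 1` lies in a normal subgroup `N`, then `h` displaces some
open set `U`, and `⁅f, ⁅g, h⁆⁆ = ⁅f, g⁆` for `f` and `g` supported in `U`. Compressing supports into
`U`, every commutator of two elements with a common fixed open set lies in `N`.

Two facts then force `N` to be the whole group. Every rational homeomorphism is a product of two
elements each fixing an open set pointwise, one of them exchanging a small clopen set with its
image. Every element fixing an open set pointwise is conjugate to one supported in the cone of
`aab`, which is a commutator of elements supported in the cone of `a` by an infinite swindle:
copies of a homeomorphism `φ` on nested cones form a rational homeomorphism `S = φ * S'`, where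
`S'` is the copy of `S` on the next cone, and a copy of `S` on a cone is conjugate to the next one.

Rationality is handled through the weaker requirement that `f (α ⌢ x) = β ⌢ g x` with `g` in a
finite set, for prefixes `β` that need not be maximal; this is a local property by König's lemma.
-/

open Set Function MulAction Topology
open scoped Pointwise commutatorElement

namespace RationalGroup

section SimplicityCriterion

variable {G X : Type*} [Group G] [MulAction G X]

theorem smul_mem_iff_of_mem_fixingSubgroup {s : Set X} {g : G} (hg : g ∈ fixingSubgroup G s)
    {x : X} : g • x ∈ s ↔ x ∈ s :=
  smul_mem_of_set_mem_fixedBy (set_mem_fixedBy_of_subset_fixedBy ((mem_fixingSubgroup_iff G).1 hg))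

theorem smul_mem_iff_of_mem_fixingSubgroup_compl {s : Set X} {g : G}
    (hg : g ∈ fixingSubgroup G sᶜ) {x : X} : g • x ∈ s ↔ x ∈ s :=
  not_iff_not.1 (smul_mem_iff_of_mem_fixingSubgroup hg)

theorem commute_of_mem_fixingSubgroup_compl [FaithfulSMul G X] {s : Set X} {f g : G}
    (hf : f ∈ fixingSubgroup G s) (hg : g ∈ fixingSubgroup G sᶜ) : Commute f g := by
  refine eq_of_smul_eq_smul fun x : X => ?_
  have hfs := smul_mem_iff_of_mem_fixingSubgroup hf (x := x)
  have hgs := smul_mem_iff_of_mem_fixingSubgroup_compl hg (x := x)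
  rw [mem_fixingSubgroup_iff] at hf hg
  rw [mul_smul, mul_smul]
  by_cases hx : x ∈ s
  · rw [hf x hx, hf _ (hgs.2 hx)]
  · rw [hg x hx, hg _ (mt hfs.1 hx)]

theorem conj_mem_fixingSubgroup {s t : Set X} {f : G} (hf : f ∈ fixingSubgroup G s) {g : G}
    (hst : t ⊆ g • s) : g * f * g⁻¹ ∈ fixingSubgroup G t :=
  fixingSubgroup_antitone G X hst (Set.conj_mem_fixingSubgroup rfl hf)

theorem commutator_mem_of_disjoint_smul [FaithfulSMul G X] {N : Subgroup G} [N.Normal] {h : G}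
    (hh : h ∈ N) {U : Set X} (hU : Disjoint U (h • U)) {f g : G}
    (hf : f ∈ fixingSubgroup G Uᶜ) (hg : g ∈ fixingSubgroup G Uᶜ) : ⁅f, g⁆ ∈ N := by
  have hconj : h * g⁻¹ * h⁻¹ ∈ fixingSubgroup G U :=
    conj_mem_fixingSubgroup (inv_mem hg)
      (by rw [Set.smul_set_compl]; exact hU.subset_compl_right)
  have hcomm : f⁻¹ * (h * g⁻¹ * h⁻¹)⁻¹ = (h * g⁻¹ * h⁻¹)⁻¹ * f⁻¹ :=
    (commute_of_mem_fixingSubgroup_compl hconj hf).inv_inv.eq.symm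
  have hgh : ⁅g, h⁆ ∈ N := N.mul_mem (‹N.Normal›.conj_mem h hh g) (N.inv_mem hh)
  have hdouble : ⁅f, ⁅g, h⁆⁆ = ⁅f, g⁆ := calc
    ⁅f, ⁅g, h⁆⁆ = f * g * (h * g⁻¹ * h⁻¹) * (f⁻¹ * (h * g⁻¹ * h⁻¹)⁻¹) * g⁻¹ := by
      simp only [commutatorElement_def]; group
    _ = ⁅f, g⁆ := by rw [hcomm, commutatorElement_def]; group
  exact hdouble ▸ N.mul_mem (‹N.Normal›.conj_mem _ hgh f) (N.inv_mem hgh)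

variable [TopologicalSpace X]

instance [ContinuousConstSMul G X] (H : Subgroup G) : ContinuousConstSMul H X :=
  ⟨fun h => continuous_const_smul (h : G)⟩

theorem exists_isOpen_disjoint_smul [ContinuousConstSMul G X] [T2Space X] [FaithfulSMul G X]
    {h : G} (hh : h ≠ 1) : ∃ U : Set X, IsOpen U ∧ U.Nonempty ∧ Disjoint U (h • U) := by
  obtain ⟨x, hx⟩ : ∃ x : X, h • x ≠ x := by
    contrapose! hh
    exact eq_of_smul_eq_smul fun x : X => by rw [hh, one_smul]
  obtain ⟨V, W, hV, hW, hxV, hxW, hVW⟩ := t2_separation hx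
  refine ⟨W ∩ (h • ·) ⁻¹' V, hW.inter (hV.preimage (continuous_const_smul h)), ⟨x, hxW, hxV⟩, ?_⟩
  rw [Set.disjoint_right]
  rintro _ ⟨y, hy, rfl⟩ hy'
  exact Set.disjoint_left.1 hVW hy.2 hy'.1

variable (G X) in
/-- Glasner's notion of an extremely proximal action: every closed proper subset can be moved into
any nonempty open subset. The closed set is given by its complement `V`. -/
def IsExtremelyProximal : Prop :=
  ∀ ⦃V W : Set X⦄, IsOpen V → V.Nonempty → IsOpen W → W.Nonempty → ∃ g : G, g • Vᶜ ⊆ W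

namespace IsExtremelyProximal

theorem nontrivial [T1Space X] [Nontrivial X] (hG : IsExtremelyProximal G X) : Nontrivial G := by
  obtain ⟨x, y, hxy⟩ := exists_pair_ne X
  obtain ⟨g, hg⟩ := hG (isOpen_compl_singleton (x := x)) ⟨y, hxy.symm⟩
    (isOpen_compl_singleton (x := x)) ⟨y, hxy.symm⟩
  refine ⟨g, 1, fun h => ?_⟩
  rw [h, one_smul, compl_compl, singleton_subset_iff] at hg
  exact hg rfl

theorem commutator_mem [ContinuousConstSMul G X] [T2Space X] [FaithfulSMul G X]
    (hG : IsExtremelyProximal G X) {N : Subgroup G} [N.Normal] (hN : N ≠ ⊥) {V : Set X}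
    (hV : IsOpen V) (hV₀ : V.Nonempty) {f g : G} (hf : f ∈ fixingSubgroup G V)
    (hg : g ∈ fixingSubgroup G V) : ⁅f, g⁆ ∈ N := by
  obtain ⟨h, hhN, hh⟩ := N.bot_or_exists_ne_one.resolve_left hN
  obtain ⟨U, hU, hU₀, hUh⟩ := exists_isOpen_disjoint_smul (X := X) hh
  obtain ⟨r, hr⟩ := hG hV hV₀ hU hU₀
  have hUV : Uᶜ ⊆ r • V := by rwa [Set.smul_set_compl, compl_subset_comm] at hr
  have hconj := commutator_mem_of_disjoint_smul hhN hUh (conj_mem_fixingSubgroup hf hUV)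
    (conj_mem_fixingSubgroup hg hUV)
  rwa [← conjugate_commutatorElement, ‹N.Normal›.mem_comm_iff, inv_mul_cancel_left] at hconj

theorem isSimpleGroup [ContinuousConstSMul G X] [T2Space X] [FaithfulSMul G X] [Nontrivial X]
    (hG : IsExtremelyProximal G X)
    (hcomm : ∃ U V : Set X, IsOpen U ∧ U.Nonempty ∧ IsOpen V ∧ V.Nonempty ∧
      ∀ f ∈ fixingSubgroup G Uᶜ, ∃ g ∈ fixingSubgroup G V, ∃ h ∈ fixingSubgroup G V, ⁅g, h⁆ = f)
    (hfrag : ∀ f : G, ∃ V W : Set X, IsOpen V ∧ V.Nonempty ∧ IsOpen W ∧ W.Nonempty ∧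
      ∃ g ∈ fixingSubgroup G V, ∃ h ∈ fixingSubgroup G W, g * h = f) :
    IsSimpleGroup G := by
  have := hG.nontrivial
  refine ⟨fun N hN => or_iff_not_imp_left.2 fun hN₀ => ?_⟩
  have fixingSubgroup_le : ∀ W : Set X, IsOpen W → W.Nonempty → fixingSubgroup G W ≤ N := by
    intro W hW hW₀ f hf
    obtain ⟨U, V, hU, hU₀, hV, hV₀, hUV⟩ := hcomm
    obtain ⟨r, hr⟩ := hG hW hW₀ hU hU₀
    rw [Set.smul_set_compl, compl_subset_comm] at hr
    obtain ⟨g, hg, h, hh, hgh⟩ := hUV _ (conj_mem_fixingSubgroup hf hr)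
    have hconj : r * f * r⁻¹ ∈ N := hgh ▸ hG.commutator_mem hN₀ hV hV₀ hg hh
    rwa [hN.mem_comm_iff, inv_mul_cancel_left] at hconj
  refine eq_top_iff.2 fun f _ => ?_
  obtain ⟨V, W, hV, hV₀, hW, hW₀, g, hg, h, hh, rfl⟩ := hfrag f
  exact N.mul_mem (fixingSubgroup_le V hV hV₀ hg) (fixingSubgroup_le W hW hW₀ hh)

end IsExtremelyProximal

end SimplicityCriterion

section Extend

variable {X Y : Type*} {i : Y → X}

theorem extend_comp_extend_id (hi : Injective i) (f g : Y → Y) :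
    extend i (i ∘ f) id ∘ extend i (i ∘ g) id = extend i (i ∘ f ∘ g) id := by
  funext x
  by_cases hx : ∃ y, i y = x
  · obtain ⟨y, rfl⟩ := hx
    simp only [comp_apply, hi.extend_apply]
  · simp only [comp_apply, extend_apply' _ _ x hx, id_eq]

theorem extend_comp_id_id (hi : Injective i) : extend i (i ∘ id) id = id := by
  funext x
  by_cases hx : ∃ y, i y = x
  · obtain ⟨y, rfl⟩ := hx
    simp only [comp_apply, hi.extend_apply, id_eq]
  · simp only [extend_apply' _ _ x hx]

end Extend

section Homeomorphisms

variable {X Y Z : Type*} [TopologicalSpace X] [TopologicalSpace Y] [TopologicalSpace Z]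

instance homeoMulAction : MulAction (X ≃ₜ X) X where
  smul f x := f x
  one_smul _ := rfl
  mul_smul _ _ _ := rfl

instance : FaithfulSMul (X ≃ₜ X) X := ⟨fun h => Homeomorph.ext h⟩

instance : ContinuousConstSMul (X ≃ₜ X) X := ⟨fun f => f.continuous⟩

open scoped Classical in
theorem continuous_piecewise_of_isClopen {s : Set X} (hs : IsClopen s) {f g : X → Y}
    (hf : Continuous f) (hg : Continuous g) : Continuous (s.piecewise f g) :=
  hf.piecewise (by simp [hs.frontier_eq]) hg

theorem continuous_extend {i : Y → X} (hi : IsOpenEmbedding i) (hc : IsClosed (range i))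
    {f : Y → Z} {g : X → Z} (hf : Continuous f) (hg : Continuous g) :
    Continuous (extend i f g) := by
  refine continuous_iff_continuousAt.2 fun x => ?_
  by_cases hx : x ∈ range i
  · obtain ⟨y, rfl⟩ := hx
    rw [← hi.continuousAt_iff, extend_comp hi.injective]
    exact hf.continuousAt
  · refine hg.continuousAt.congr ?_
    filter_upwards [hc.isOpen_compl.mem_nhds hx] with y hy
    exact (extend_apply' f g y hy).symm

section ExtendHom

variable {i : Y → X} {hi : IsOpenEmbedding i} {hc : IsClosed (range i)}

variable (hi hc) in
/-- A homeomorphism of `Y` acts on `X` through a clopen embedding `i : Y → X`, by the identity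
off the range of `i`. -/
noncomputable def extendHom : (Y ≃ₜ Y) →* (X ≃ₜ X) where
  toFun f :=
    { toFun := extend i (i ∘ f) id
      invFun := extend i (i ∘ f.symm) id
      left_inv := congrFun <| (extend_comp_extend_id hi.injective f.symm f).trans <| by
        rw [f.symm_comp_self, extend_comp_id_id hi.injective]; rfl
      right_inv := congrFun <| (extend_comp_extend_id hi.injective f f.symm).trans <| by
        rw [f.self_comp_symm, extend_comp_id_id hi.injective]; rfl
      continuous_toFun := continuous_extend hi hc (hi.continuous.comp f.continuous) continuous_id
      continuous_invFun :=
        continuous_extend hi hc (hi.continuous.comp f.symm.continuous) continuous_id }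
  map_one' := Homeomorph.ext <| congrFun <| extend_comp_id_id hi.injective
  map_mul' f g := Homeomorph.ext <| congrFun <| (extend_comp_extend_id hi.injective f g).symm

theorem extendHom_apply (f : Y ≃ₜ Y) (y : Y) : extendHom hi hc f (i y) = i (f y) :=
  hi.injective.extend_apply _ _ y

theorem extendHom_apply_of_notMem (f : Y ≃ₜ Y) {x : X} (hx : x ∉ range i) :
    extendHom hi hc f x = x :=
  extend_apply' _ _ x hx

theorem eq_extendHom {g : X ≃ₜ X} {f : Y ≃ₜ Y} (h : ∀ y, g (i y) = i (f y))
    (h' : ∀ x ∉ range i, g x = x) : g = extendHom hi hc f := by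
  refine Homeomorph.ext fun x => ?_
  by_cases hx : x ∈ range i
  · obtain ⟨y, rfl⟩ := hx
    rw [h, extendHom_apply]
  · rw [h' x hx, extendHom_apply_of_notMem f hx]

theorem range_extendHom : (extendHom hi hc).range = fixingSubgroup (X ≃ₜ X) (range i)ᶜ := by
  refine le_antisymm ?_ fun g hg => ?_
  · rintro _ ⟨f, rfl⟩
    exact (mem_fixingSubgroup_iff _).2 fun x hx => extendHom_apply_of_notMem f hx
  · have hrange : ∀ x, x ∈ range i ↔ g x ∈ range i := fun x =>
      (smul_mem_iff_of_mem_fixingSubgroup_compl hg).symm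
    let e : Y ≃ₜ range i := hi.isEmbedding.toHomeomorph
    refine ⟨e.trans ((g.subtype hrange).trans e.symm), (eq_extendHom (fun y => ?_)
      ((mem_fixingSubgroup_iff _).1 hg)).symm⟩
    exact (congrArg Subtype.val (e.apply_symm_apply (g.subtype hrange (e y)))).symm

theorem conj_extendHom {j : Y → X} {hj : IsOpenEmbedding j} {hc' : IsClosed (range j)}
    {g : X ≃ₜ X} (hij : g ∘ i = j) (f : Y ≃ₜ Y) :
    g * extendHom hi hc f * g⁻¹ = extendHom hj hc' f := by
  subst hij
  refine eq_extendHom (fun y => ?_) fun x hx => ?_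
  · simp [extendHom_apply]
  · have hx' : g.symm x ∉ range i := by
      rintro ⟨y, hy⟩
      exact hx ⟨y, by simp [hy]⟩
    simp [extendHom_apply_of_notMem f hx']

end ExtendHom

section Exchange

variable {f : X ≃ₜ X} {D : Set X}

open scoped Classical in
/-- The map which is `f` on `D`, `f⁻¹` on `f '' D`, and the identity elsewhere. -/
noncomputable def exchangeFun (f : X ≃ₜ X) (D : Set X) : X → X :=
  D.piecewise f ((f '' D).piecewise f.symm id)

open scoped Classical in
theorem exchangeFun_of_mem {x : X} (hx : x ∈ D) : exchangeFun f D x = f x :=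
  piecewise_eq_of_mem _ _ _ hx

open scoped Classical in
theorem exchangeFun_apply (hD : Disjoint D (f '' D)) {x : X} (hx : x ∈ D) :
    exchangeFun f D (f x) = x := by
  rw [exchangeFun, piecewise_eq_of_notMem _ _ _ (hD.notMem_of_mem_right (mem_image_of_mem f hx)),
    piecewise_eq_of_mem _ _ _ (mem_image_of_mem f hx), f.symm_apply_apply]

open scoped Classical in
theorem exchangeFun_of_notMem {x : X} (hx : x ∉ D ∪ f '' D) : exchangeFun f D x = x := by
  rw [mem_union, not_or] at hx
  rw [exchangeFun, piecewise_eq_of_notMem _ _ _ hx.1, piecewise_eq_of_notMem _ _ _ hx.2, id]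

theorem exchangeFun_involutive (hD : Disjoint D (f '' D)) : Involutive (exchangeFun f D) := by
  intro x
  by_cases hx : x ∈ D ∪ f '' D
  · rcases hx with hx | ⟨y, hy, rfl⟩
    · rw [exchangeFun_of_mem hx, exchangeFun_apply hD hx]
    · rw [exchangeFun_apply hD hy, exchangeFun_of_mem hy]
  · rw [exchangeFun_of_notMem hx, exchangeFun_of_notMem hx]

theorem continuous_exchangeFun (hD : IsClopen D) : Continuous (exchangeFun f D) :=
  continuous_piecewise_of_isClopen hD f.continuous
    (continuous_piecewise_of_isClopen
      ⟨f.isClosed_image.2 hD.1, f.isOpen_image.2 hD.2⟩ f.symm.continuous continuous_id)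

/-- The involution exchanging a clopen set `D` with its disjoint image `f '' D`. -/
noncomputable def exchange (f : X ≃ₜ X) {D : Set X} (hD : IsClopen D)
    (hfD : Disjoint D (f '' D)) : X ≃ₜ X where
  toFun := exchangeFun f D
  invFun := exchangeFun f D
  left_inv := exchangeFun_involutive hfD
  right_inv := exchangeFun_involutive hfD
  continuous_toFun := continuous_exchangeFun hD
  continuous_invFun := continuous_exchangeFun hD

theorem exists_isClopen_disjoint_image [CompactSpace X] [T2Space X] [TotallyDisconnectedSpace X]
    [Infinite X] {f : X ≃ₜ X} (hf : f ≠ 1) :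
    ∃ D : Set X, IsClopen D ∧ D.Nonempty ∧ Disjoint D (f '' D) ∧ (D ∪ f '' D)ᶜ.Nonempty := by
  obtain ⟨x, hx⟩ : ∃ x, f x ≠ x := by
    contrapose! hf
    exact Homeomorph.ext hf
  obtain ⟨z, hz⟩ := (toFinite {x, f x}).exists_notMem
  simp only [mem_insert_iff, mem_singleton_iff, not_or] at hz
  obtain ⟨U, hU, hxU, hUs⟩ := compact_exists_isClopen_in_isOpen
    (toFinite {f x, z, f.symm z}).isClosed.isOpen_compl (x := x) (by
      simp only [mem_compl_iff, mem_insert_iff, mem_singleton_iff, not_or, f.eq_symm_apply]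
      exact ⟨hx.symm, hz.1 ∘ Eq.symm, hz.2 ∘ Eq.symm⟩)
  have hfx : f x ∉ U := fun h => hUs h (by simp)
  refine ⟨U ∩ f ⁻¹' Uᶜ, hU.inter (hU.compl.preimage f.continuous), ⟨x, hxU, hfx⟩, ?_, z, ?_⟩
  · rw [disjoint_right]
    rintro _ ⟨y, hy, rfl⟩ hfy
    exact hy.2 hfy.1
  · rintro (hzU | ⟨y, hy, rfl⟩)
    · exact hUs hzU.1 (by simp)
    · exact hUs hy.1 (by simp)

end Exchange

end Homeomorphisms

section Words

variable {A Y : Type*}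

theorem wordAppend_nil (x : ℕ → A) : wordAppend [] x = x := by
  funext n
  simp [wordAppend]

theorem wordAppend_cons_zero (a : A) (α : List A) (x : ℕ → A) : wordAppend (a :: α) x 0 = a := by
  simp [wordAppend]

theorem wordAppend_singleton_succ (a : A) (x : ℕ → A) (n : ℕ) :
    wordAppend [a] x (n + 1) = x n := by
  simp [wordAppend]

/-- The one-sided shift on sequences. -/
def tail (x : ℕ → A) : ℕ → A := fun n => x (n + 1)

theorem tail_wordAppend_cons (a : A) (α : List A) (x : ℕ → A) :
    tail (wordAppend (a :: α) x) = wordAppend α x := by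
  funext n
  simp [tail, wordAppend]

theorem tail_iterate_wordAppend (α : List A) (x : ℕ → A) :
    tail^[α.length] (wordAppend α x) = x := by
  induction α with
  | nil => exact wordAppend_nil x
  | cons a α ih => rw [List.length_cons, iterate_succ_apply, tail_wordAppend_cons, ih]

theorem wordAppend_injective (α : List A) : Injective (wordAppend α) :=
  LeftInverse.injective (tail_iterate_wordAppend α)

theorem ext_tail {x y : ℕ → A} (h₀ : x 0 = y 0) (h : tail x = tail y) : x = y := by
  funext n
  cases n with
  | zero => exact h₀
  | succ n => exact congrFun h n

theorem wordAppend_append (α β : List A) (x : ℕ → A) :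
    wordAppend (α ++ β) x = wordAppend α (wordAppend β x) := by
  induction α with
  | nil => rw [List.nil_append, wordAppend_nil]
  | cons a α ih =>
    refine ext_tail ?_ ?_
    · rw [List.cons_append, wordAppend_cons_zero, wordAppend_cons_zero]
    · rw [List.cons_append, tail_wordAppend_cons, tail_wordAppend_cons, ih]

theorem wordAppend_mem_cone (α : List A) (x : ℕ → A) : wordAppend α x ∈ cone α :=
  mem_range_self x

theorem mem_cone_iff {x : ℕ → A} {α : List A} :
    x ∈ cone α ↔ ∀ (i : ℕ) (hi : i < α.length), x i = α[i] := by
  refine ⟨?_, fun h => ⟨fun n => x (n + α.length), funext fun n => ?_⟩⟩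
  · rintro ⟨y, rfl⟩ i hi
    simp [wordAppend, hi]
  · by_cases hn : n < α.length
    · simp [wordAppend, hn, h n hn]
    · simp [wordAppend, hn, Nat.sub_add_cancel (not_lt.1 hn)]

theorem mem_cone_singleton_iff {x : ℕ → A} {a : A} : x ∈ cone [a] ↔ x 0 = a := by
  simp [mem_cone_iff]

theorem map_range_eq_of_mem_cone {x : ℕ → A} {α : List A} (hx : x ∈ cone α) :
    (List.range α.length).map x = α :=
  List.ext_getElem (by simp) fun i _ hi => by simpa using mem_cone_iff.1 hx i hi

theorem cone_map_range (x : ℕ → A) (n : ℕ) :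
    cone ((List.range n).map x) = PiNat.cylinder x n := by
  ext y
  simp [mem_cone_iff, PiNat.mem_cylinder_iff]

theorem cone_eq_cylinder {x : ℕ → A} {α : List A} (hx : x ∈ cone α) :
    cone α = PiNat.cylinder x α.length := by
  rw [← cone_map_range, map_range_eq_of_mem_cone hx]

/-- A family of sequences is reduced if its members have no common first letter. -/
def IsReduced (F : Y → ℕ → A) : Prop := ∃ x y, F x 0 ≠ F y 0

theorem exists_eq_wordAppend_isReduced {F : Y → ℕ → A} {x y : Y} (hxy : F x ≠ F y) :
    ∃ (β : List A) (G : Y → ℕ → A), (∀ x, F x = wordAppend β (G x)) ∧ IsReduced G := by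
  obtain ⟨n, hn⟩ := Function.ne_iff.1 hxy
  clear hxy
  induction n generalizing F with
  | zero => exact ⟨[], F, fun x => (wordAppend_nil _).symm, x, y, hn⟩
  | succ n ih =>
    by_cases hF : IsReduced F
    · exact ⟨[], F, fun x => (wordAppend_nil _).symm, hF⟩
    · simp only [IsReduced, not_exists, not_not] at hF
      obtain ⟨β, G, hG, hG'⟩ := ih (F := fun x => tail (F x)) hn
      refine ⟨F x 0 :: β, G, fun z => ext_tail ?_ ?_, hG'⟩
      · rw [wordAppend_cons_zero, hF z x]
      · rw [tail_wordAppend_cons, ← hG z]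

theorem IsReduced.eq_nil {F G : Y → ℕ → A} (hF : IsReduced F) {β : List A}
    (h : ∀ x, F x = wordAppend β (G x)) : β = [] := by
  cases β with
  | nil => rfl
  | cons b β =>
    obtain ⟨x, y, hxy⟩ := hF
    rw [h, h, wordAppend_cons_zero, wordAppend_cons_zero] at hxy
    exact absurd rfl hxy

theorem IsReduced.exists_eq_wordAppend {F G : Y → ℕ → A} (hG : IsReduced G) {β γ : List A}
    (h : ∀ x, wordAppend β (F x) = wordAppend γ (G x)) :
    ∃ δ, ∀ x, F x = wordAppend δ (G x) := by
  induction β generalizing γ with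
  | nil => exact ⟨γ, fun x => by rw [← h, wordAppend_nil]⟩
  | cons b β ih =>
    cases γ with
    | nil => exact absurd (hG.eq_nil fun x => by rw [h, wordAppend_nil]) (List.cons_ne_nil b β)
    | cons c γ =>
      exact ih fun x => by rw [← tail_wordAppend_cons b, h, tail_wordAppend_cons]

theorem IsReduced.eq_of_wordAppend_eq {F G : Y → ℕ → A} (hF : IsReduced F) (hG : IsReduced G)
    {β γ : List A} (h : ∀ x, wordAppend β (F x) = wordAppend γ (G x)) : F = G := by
  obtain ⟨δ, hδ⟩ := hG.exists_eq_wordAppend h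
  obtain rfl := hF.eq_nil hδ
  exact funext fun x => by rw [hδ, wordAppend_nil]

section Topology

variable [TopologicalSpace A]

theorem continuous_tail : Continuous (tail : (ℕ → A) → ℕ → A) :=
  continuous_pi fun n => continuous_apply (n + 1)

theorem continuous_wordAppend (α : List A) : Continuous (wordAppend α) := by
  refine continuous_pi fun n => ?_
  by_cases hn : n < α.length
  · simpa [wordAppend, hn] using continuous_const
  · simpa [wordAppend, hn] using continuous_apply _

variable [DiscreteTopology A]

theorem isClosedEmbedding_wordAppend (α : List A) : IsClosedEmbedding (wordAppend α) :=
  LeftInverse.isClosedEmbedding (tail_iterate_wordAppend α) (continuous_tail.iterate _)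
    (continuous_wordAppend α)

theorem isClopen_cone (α : List A) : IsClopen (cone α) := by
  refine ⟨(isClosedEmbedding_wordAppend α).isClosed_range, isOpen_iff_mem_nhds.2 fun x hx => ?_⟩
  rw [cone_eq_cylinder hx]
  exact (PiNat.isOpen_cylinder _ x _).mem_nhds (PiNat.self_mem_cylinder x _)

theorem isOpenEmbedding_wordAppend (α : List A) : IsOpenEmbedding (wordAppend α) :=
  ⟨(isClosedEmbedding_wordAppend α).isEmbedding, (isClopen_cone α).isOpen⟩

theorem exists_cone_subset {U : Set (ℕ → A)} {x : ℕ → A} (hU : U ∈ 𝓝 x) :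
    ∃ α, x ∈ cone α ∧ cone α ⊆ U := by
  obtain ⟨_, ⟨z, n, rfl⟩, hxz, hzU⟩ :=
    (PiNat.isTopologicalBasis_cylinders fun _ => A).mem_nhds_iff.1 hU
  refine ⟨(List.range n).map z, ?_⟩
  rw [cone_map_range]
  exact ⟨hxz, hzU⟩

end Topology

end Words

section FiniteState

variable {A B C : Type*}

/-- A map of sequences is finite-state if up to prefixes it has finitely many restrictions to
cones. The prefixes need not be the longest possible, so this also makes sense for maps which are
constant on a cone. -/
def IsFiniteState (f : (ℕ → A) → ℕ → B) : Prop :=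
  ∃ S : Set ((ℕ → A) → ℕ → B), S.Finite ∧
    ∀ α, ∃ β, ∃ g ∈ S, ∀ x, f (wordAppend α x) = wordAppend β (g x)

theorem isRational_iff_isFiniteState [TopologicalSpace A] [Nontrivial A]
    {f : (ℕ → A) ≃ₜ (ℕ → A)} : IsRational f ↔ IsFiniteState f := by
  constructor
  · refine fun hf => ⟨_, hf, fun α => ?_⟩
    obtain ⟨x, y, hxy⟩ := exists_pair_ne (ℕ → A)
    obtain ⟨β, g, hβ, hg⟩ := exists_eq_wordAppend_isReduced (F := fun x => f (wordAppend α x))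
      ((f.injective.comp (wordAppend_injective α)).ne hxy)
    exact ⟨β, g, ⟨α, β, hβ, hg⟩, hβ⟩
  · rintro ⟨S, hS, hf⟩
    have hfin : (⋃ s ∈ S, {g | IsReduced g ∧ ∃ δ, ∀ x, s x = wordAppend δ (g x)}).Finite := by
      refine hS.biUnion fun s _ => Set.Subsingleton.finite ?_
      rintro g ⟨hg, δ, hδ⟩ h ⟨hh, ε, hε⟩
      exact hg.eq_of_wordAppend_eq hh fun x => (hδ x).symm.trans (hε x)
    refine hfin.subset ?_
    rintro g ⟨α, γ, hγ, hg : IsReduced g⟩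
    obtain ⟨β, s, hs, hβ⟩ := hf α
    exact mem_biUnion hs ⟨hg, hg.exists_eq_wordAppend fun x => (hβ x).symm.trans (hγ x)⟩

theorem isFiniteState_wordAppend (γ : List A) : IsFiniteState (wordAppend γ) :=
  ⟨{id}, finite_singleton id, fun α => ⟨γ ++ α, id, rfl, fun x => (wordAppend_append γ α x).symm⟩⟩

theorem isFiniteState_id : IsFiniteState (id : (ℕ → A) → ℕ → A) :=
  ⟨{id}, finite_singleton _, fun α => ⟨α, id, rfl, fun _ => rfl⟩⟩

theorem isFiniteState_tail : IsFiniteState (tail : (ℕ → A) → ℕ → A) := by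
  refine ⟨{tail, id}, toFinite _, fun α => ?_⟩
  cases α with
  | nil => exact ⟨[], _, .inl rfl, fun x => by rw [wordAppend_nil, wordAppend_nil]⟩
  | cons a α => exact ⟨α, _, .inr rfl, tail_wordAppend_cons a α⟩

namespace IsFiniteState

theorem comp {f : (ℕ → B) → ℕ → C} {g : (ℕ → A) → ℕ → B} (hf : IsFiniteState f)
    (hg : IsFiniteState g) : IsFiniteState (f ∘ g) := by
  obtain ⟨S, hS, hf⟩ := hf
  obtain ⟨T, hT, hg⟩ := hg
  refine ⟨image2 (fun s t => s ∘ t) S T, hS.image2 _ hT, fun α => ?_⟩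
  obtain ⟨β, t, ht, hβ⟩ := hg α
  obtain ⟨γ, s, hs, hγ⟩ := hf β
  exact ⟨γ, s ∘ t, mem_image2_of_mem hs ht, fun x => by rw [comp_apply, hβ, hγ, comp_apply]⟩

theorem iterate {f : (ℕ → A) → ℕ → A} (hf : IsFiniteState f) (n : ℕ) : IsFiniteState f^[n] := by
  induction n with
  | zero => exact isFiniteState_id
  | succ n ih => exact ih.comp hf

theorem of_comp_wordAppend_singleton [Finite A] {f : (ℕ → A) → ℕ → B}
    (hf : ∀ a, IsFiniteState (f ∘ wordAppend [a])) : IsFiniteState f := by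
  choose S hS hf using hf
  refine ⟨insert f (⋃ a, S a), (finite_iUnion hS).insert f, fun α => ?_⟩
  cases α with
  | nil => exact ⟨[], f, mem_insert _ _, fun x => by rw [wordAppend_nil, wordAppend_nil]⟩
  | cons a α =>
    obtain ⟨β, g, hg, hβ⟩ := hf a α
    refine ⟨β, g, mem_insert_of_mem f (mem_iUnion_of_mem a hg), fun x => ?_⟩
    rw [← hβ, comp_apply, ← wordAppend_append, List.singleton_append]

/-- By König's lemma: a map that is not finite-state would fail to be finite-state on every cone
around some point. -/
theorem of_forall_exists_cone [Finite A] {f : (ℕ → A) → ℕ → B}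
    (hf : ∀ x, ∃ α, x ∈ cone α ∧ IsFiniteState (f ∘ wordAppend α)) : IsFiniteState f := by
  by_contra hf₀
  let Bad := {α : List A // ¬ IsFiniteState (f ∘ wordAppend α)}
  have hstep : ∀ α : Bad, ∃ a, ¬ IsFiniteState (f ∘ wordAppend (α.1 ++ [a])) := by
    rintro ⟨α, hα⟩
    by_contra! hαa
    refine hα (of_comp_wordAppend_singleton fun a => ?_)
    convert hαa a using 1
    exact funext fun x => congrArg f (wordAppend_append α [a] x).symm
  choose letter hletter using hstep
  have hnil : ¬ IsFiniteState (f ∘ wordAppend []) := by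
    rwa [show f ∘ wordAppend [] = f from funext fun x => congrArg f (wordAppend_nil x)]
  let branch : ℕ → Bad := Nat.rec ⟨[], hnil⟩ fun _ α => ⟨α.1 ++ [letter α], hletter α⟩
  have hbranch : ∀ n, (List.range n).map (letter ∘ branch) = (branch n).1 := by
    intro n
    induction n with
    | zero => rfl
    | succ n ih => rw [List.range_succ, List.map_append, ih]; rfl
  obtain ⟨α, hα, hαf⟩ := hf (letter ∘ branch)
  rw [← map_range_eq_of_mem_cone hα, hbranch] at hαf
  exact (branch α.length).2 hαf

variable [TopologicalSpace A] [DiscreteTopology A] [Finite A]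

theorem of_eventuallyEq {f : (ℕ → A) → ℕ → B}
    (hf : ∀ x, ∃ g, IsFiniteState g ∧ f =ᶠ[𝓝 x] g) : IsFiniteState f := by
  refine of_forall_exists_cone fun x => ?_
  obtain ⟨g, hg, hfg⟩ := hf x
  obtain ⟨α, hxα, hα⟩ := exists_cone_subset hfg
  refine ⟨α, hxα, ?_⟩
  rw [show f ∘ wordAppend α = g ∘ wordAppend α from
    funext fun y => hα (wordAppend_mem_cone α y)]
  exact hg.comp (isFiniteState_wordAppend α)

open scoped Classical in
theorem piecewise {D : Set (ℕ → A)} (hD : IsClopen D) {f g : (ℕ → A) → ℕ → B}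
    (hf : IsFiniteState f) (hg : IsFiniteState g) : IsFiniteState (D.piecewise f g) := by
  refine of_eventuallyEq fun x => ?_
  by_cases hx : x ∈ D
  · exact ⟨f, hf, (piecewise_eqOn D f g).eventuallyEq_of_mem (hD.isOpen.mem_nhds hx)⟩
  · exact ⟨g, hg, (piecewise_eqOn_compl D f g).eventuallyEq_of_mem
      (hD.compl.isOpen.mem_nhds hx)⟩

theorem exchange {f : (ℕ → A) ≃ₜ (ℕ → A)} (hf : IsFiniteState f) (hf' : IsFiniteState f.symm)
    {D : Set (ℕ → A)} (hD : IsClopen D) (hfD : Disjoint D (f '' D)) :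
    IsFiniteState (exchange f hD hfD) :=
  piecewise hD hf <| piecewise ⟨f.isClosed_image.2 hD.1, f.isOpen_image.2 hD.2⟩ hf' isFiniteState_id

end IsFiniteState

end FiniteState

section OnCone

variable {A : Type*} [TopologicalSpace A] [DiscreteTopology A]

/-- The homeomorphism acting by `f` on the cone of `α`, and by the identity elsewhere. -/
noncomputable def onCone (α : List A) : ((ℕ → A) ≃ₜ (ℕ → A)) →* ((ℕ → A) ≃ₜ (ℕ → A)) :=
  extendHom (isOpenEmbedding_wordAppend α) (isClopen_cone α).isClosed

theorem onCone_wordAppend (α : List A) (f : (ℕ → A) ≃ₜ (ℕ → A)) (x : ℕ → A) :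
    onCone α f (wordAppend α x) = wordAppend α (f x) :=
  extendHom_apply f x

theorem onCone_of_notMem {α : List A} (f : (ℕ → A) ≃ₜ (ℕ → A)) {x : ℕ → A} (hx : x ∉ cone α) :
    onCone α f x = x :=
  extendHom_apply_of_notMem f hx

theorem range_onCone (α : List A) :
    (onCone α).range = fixingSubgroup ((ℕ → A) ≃ₜ (ℕ → A)) (cone α)ᶜ :=
  range_extendHom

theorem onCone_append (α β : List A) (f : (ℕ → A) ≃ₜ (ℕ → A)) :
    onCone (α ++ β) f = onCone α (onCone β f) := by
  refine (eq_extendHom (fun x => ?_) fun x hx => ?_).symm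
  · rw [wordAppend_append, onCone_wordAppend, onCone_wordAppend, wordAppend_append]
  · by_cases hxα : x ∈ cone α
    · obtain ⟨y, rfl⟩ := hxα
      rw [onCone_wordAppend, onCone_of_notMem]
      rintro ⟨z, rfl⟩
      exact hx ⟨z, wordAppend_append α β z⟩
    · exact onCone_of_notMem _ hxα

theorem conj_onCone {α β : List A} {g : (ℕ → A) ≃ₜ (ℕ → A)}
    (hg : g ∘ wordAppend α = wordAppend β) (f : (ℕ → A) ≃ₜ (ℕ → A)) :
    g * onCone α f * g⁻¹ = onCone β f :=
  conj_extendHom hg f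

theorem isFiniteState_onCone_iff [Finite A] {α : List A} {f : (ℕ → A) ≃ₜ (ℕ → A)} :
    IsFiniteState (onCone α f) ↔ IsFiniteState f := by
  constructor <;> intro hf
  · have hcomp : f = tail^[α.length] ∘ onCone α f ∘ wordAppend α := funext fun x => by
      rw [comp_apply, comp_apply, onCone_wordAppend, tail_iterate_wordAppend]
    rw [hcomp]
    exact (isFiniteState_tail.iterate _).comp (hf.comp (isFiniteState_wordAppend α))
  · refine .of_eventuallyEq fun x => ?_
    by_cases hx : x ∈ cone α
    · refine ⟨wordAppend α ∘ f ∘ tail^[α.length], (isFiniteState_wordAppend α).comp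
        (hf.comp (isFiniteState_tail.iterate _)), ?_⟩
      filter_upwards [(isClopen_cone α).isOpen.mem_nhds hx]
      rintro _ ⟨y, rfl⟩
      rw [onCone_wordAppend, comp_apply, comp_apply, tail_iterate_wordAppend]
    · refine ⟨id, isFiniteState_id, ?_⟩
      filter_upwards [(isClopen_cone α).compl.isOpen.mem_nhds hx] with y hy
      exact onCone_of_notMem f hy

end OnCone

section Shift

variable {A : Type*}

open scoped Classical in
/-- The underlying map of `shift a b`. -/
noncomputable def shiftFun (a b : A) : (ℕ → A) → ℕ → A :=
  (cone [a]).piecewise ((cone [a, b]).piecewise (wordAppend [b, a] ∘ tail ∘ tail) tail)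
    (wordAppend [b])

open scoped Classical in
theorem shiftFun_of_notMem {a : A} (b : A) {x : ℕ → A} (hx : x ∉ cone [a]) :
    shiftFun a b x = wordAppend [b] x :=
  piecewise_eq_of_notMem _ _ _ hx

open scoped Classical in
theorem shiftFun_wordAppend_of_notMem (a : A) {b : A} {x : ℕ → A} (hx : x ∉ cone [b]) :
    shiftFun a b (wordAppend [a] x) = x := by
  have hx' : wordAppend [a] x ∉ cone [a, b] := by
    rintro ⟨y, hy⟩
    rw [← List.singleton_append, wordAppend_append] at hy
    exact hx ⟨y, wordAppend_injective _ hy⟩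
  rw [shiftFun, piecewise_eq_of_mem _ _ _ (wordAppend_mem_cone _ x),
    piecewise_eq_of_notMem _ _ _ hx', tail_wordAppend_cons, wordAppend_nil]

open scoped Classical in
theorem shiftFun_wordAppend_pair (a b : A) (x : ℕ → A) :
    shiftFun a b (wordAppend [a, b] x) = wordAppend [b, a] x := by
  rw [shiftFun, piecewise_eq_of_mem _ _ _ (mem_cone_singleton_iff.2 (wordAppend_cons_zero _ _ _)),
    piecewise_eq_of_mem _ _ _ (wordAppend_mem_cone _ x), comp_apply, comp_apply,
    tail_wordAppend_cons, tail_wordAppend_cons, wordAppend_nil]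

theorem shiftFun_leftInverse (a b : A) : LeftInverse (shiftFun b a) (shiftFun a b) := by
  intro x
  by_cases hx : x ∈ cone [a]
  · obtain ⟨x, rfl⟩ := hx
    by_cases hx : x ∈ cone [b]
    · obtain ⟨x, rfl⟩ := hx
      rw [← wordAppend_append, List.singleton_append, shiftFun_wordAppend_pair,
        shiftFun_wordAppend_pair]
    · rw [shiftFun_wordAppend_of_notMem a hx, shiftFun_of_notMem a hx]
  · rw [shiftFun_of_notMem b hx, shiftFun_wordAppend_of_notMem b hx]

variable [TopologicalSpace A] [DiscreteTopology A]

theorem continuous_shiftFun (a b : A) : Continuous (shiftFun a b) :=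
  continuous_piecewise_of_isClopen (isClopen_cone _)
    (continuous_piecewise_of_isClopen (isClopen_cone _)
      ((continuous_wordAppend _).comp (continuous_tail.comp continuous_tail)) continuous_tail)
    (continuous_wordAppend _)

/-- The homeomorphism which prefixes `b` to the sequences not starting with `a`, deletes the first
letter of those starting with `a` but not with `ab`, and replaces the prefix `ab` by `ba`. -/
noncomputable def shift (a b : A) : (ℕ → A) ≃ₜ (ℕ → A) where
  toFun := shiftFun a b
  invFun := shiftFun b a
  left_inv := shiftFun_leftInverse a b
  right_inv := shiftFun_leftInverse b a
  continuous_toFun := continuous_shiftFun a b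
  continuous_invFun := continuous_shiftFun b a

theorem shift_of_notMem {a : A} (b : A) {x : ℕ → A} (hx : x ∉ cone [a]) :
    shift a b x = wordAppend [b] x :=
  shiftFun_of_notMem b hx

theorem isFiniteState_shift [Finite A] (a b : A) : IsFiniteState (shift a b) :=
  .piecewise (isClopen_cone _)
    (.piecewise (isClopen_cone _)
      ((isFiniteState_wordAppend _).comp (isFiniteState_tail.comp isFiniteState_tail))
      isFiniteState_tail)
    (isFiniteState_wordAppend _)

end Shift

section Spread

variable {A : Type*} {a : A}

open scoped Classical in
/-- The underlying map of `spread a φ`, by recursion on the coordinates. -/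
noncomputable def spreadFun (a : A) (φ : (ℕ → A) → ℕ → A) (x : ℕ → A) : ℕ → A
  | 0 => if x 0 = a then a else φ x 0
  | n + 1 => if x 0 = a then spreadFun a φ (tail x) n else φ x (n + 1)

theorem spreadFun_wordAppend (a : A) (φ : (ℕ → A) → ℕ → A) (x : ℕ → A) :
    spreadFun a φ (wordAppend [a] x) = wordAppend [a] (spreadFun a φ x) := by
  refine ext_tail ?_ (funext fun n => ?_)
  · rw [spreadFun, if_pos (wordAppend_cons_zero _ _ _), wordAppend_cons_zero]
  · rw [tail, spreadFun, if_pos (wordAppend_cons_zero _ _ _), tail_wordAppend_cons,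
      tail_wordAppend_cons, wordAppend_nil, wordAppend_nil]

theorem spreadFun_of_notMem (φ : (ℕ → A) → ℕ → A) {x : ℕ → A} (hx : x ∉ cone [a]) :
    spreadFun a φ x = φ x := by
  rw [mem_cone_singleton_iff] at hx
  funext n
  cases n with
  | zero => rw [spreadFun, if_neg hx]
  | succ n => rw [spreadFun, if_neg hx]

theorem spreadFun_leftInverse {φ ψ : (ℕ → A) → ℕ → A} (h : LeftInverse φ ψ)
    (hψ : MapsTo ψ (cone [a])ᶜ (cone [a])ᶜ) :
    LeftInverse (spreadFun a φ) (spreadFun a ψ) := by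
  have hcompl : ∀ x ∉ cone [a], spreadFun a φ (spreadFun a ψ x) = x := fun x hx => by
    rw [spreadFun_of_notMem ψ hx, spreadFun_of_notMem φ (hψ hx), h]
  refine fun x => funext fun n => ?_
  induction n generalizing x with
  | zero =>
    by_cases hx : x ∈ cone [a]
    · obtain ⟨y, rfl⟩ := hx
      rw [spreadFun_wordAppend, spreadFun_wordAppend, wordAppend_cons_zero, wordAppend_cons_zero]
    · rw [hcompl x hx]
  | succ n ih =>
    by_cases hx : x ∈ cone [a]
    · obtain ⟨y, rfl⟩ := hx
      rw [spreadFun_wordAppend, spreadFun_wordAppend, wordAppend_singleton_succ,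
        wordAppend_singleton_succ, ih]
    · rw [hcompl x hx]

theorem IsFiniteState.spreadFun {φ : (ℕ → A) → ℕ → A} (hφ : IsFiniteState φ) :
    IsFiniteState (spreadFun a φ) := by
  obtain ⟨S, hS, hφ⟩ := hφ
  refine ⟨insert (RationalGroup.spreadFun a φ) S, hS.insert _, fun α => ?_⟩
  induction α with
  | nil => exact ⟨[], _, mem_insert _ _, fun x => by rw [wordAppend_nil, wordAppend_nil]⟩
  | cons b α ih =>
    by_cases hb : b = a
    · obtain rfl := hb
      obtain ⟨β, g, hg, hβ⟩ := ih
      refine ⟨b :: β, g, hg, fun x => ?_⟩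
      rw [← List.singleton_append, ← List.singleton_append (l := β), wordAppend_append,
        wordAppend_append, spreadFun_wordAppend, hβ]
    · obtain ⟨β, g, hg, hβ⟩ := hφ (b :: α)
      refine ⟨β, g, mem_insert_of_mem _ hg, fun x => ?_⟩
      rw [spreadFun_of_notMem, hβ]
      rwa [mem_cone_singleton_iff, wordAppend_cons_zero]

variable [TopologicalSpace A] [DiscreteTopology A]

theorem continuous_spreadFun {φ : (ℕ → A) → ℕ → A} (hφ : Continuous φ) :
    Continuous (spreadFun a φ) := by
  classical
  have ha : IsClopen {x : ℕ → A | x 0 = a} := (isClopen_discrete {a}).preimage (continuous_apply 0)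
  refine continuous_pi fun n => ?_
  induction n with
  | zero =>
    exact continuous_piecewise_of_isClopen ha continuous_const ((continuous_apply 0).comp hφ)
  | succ n ih =>
    exact continuous_piecewise_of_isClopen ha (ih.comp continuous_tail)
      ((continuous_apply (n + 1)).comp hφ)

variable {φ : (ℕ → A) ≃ₜ (ℕ → A)}

/-- For `φ` fixing the cone of `a`, the infinite product of the conjugates of `φ` acting on the
cones of `[]`, `a`, `aa`, …. -/
noncomputable def spread (hφ : φ ∈ fixingSubgroup ((ℕ → A) ≃ₜ (ℕ → A)) (cone [a])) :
    (ℕ → A) ≃ₜ (ℕ → A) where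
  toFun := spreadFun a φ
  invFun := spreadFun a φ.symm
  left_inv := spreadFun_leftInverse φ.left_inv fun _ =>
    (smul_mem_iff_of_mem_fixingSubgroup hφ).not.2
  right_inv := spreadFun_leftInverse φ.right_inv fun _ =>
    (smul_mem_iff_of_mem_fixingSubgroup (inv_mem hφ)).not.2
  continuous_toFun := continuous_spreadFun φ.continuous
  continuous_invFun := continuous_spreadFun φ.symm.continuous

theorem spread_eq_mul_onCone (hφ : φ ∈ fixingSubgroup ((ℕ → A) ≃ₜ (ℕ → A)) (cone [a])) :
    spread hφ = φ * onCone [a] (spread hφ) := by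
  refine Homeomorph.ext fun x => ?_
  by_cases hx : x ∈ cone [a]
  · obtain ⟨y, rfl⟩ := hx
    rw [Homeomorph.mul_apply, onCone_wordAppend]
    exact (spreadFun_wordAppend a φ y).trans
      ((mem_fixingSubgroup_iff _).1 hφ _ (wordAppend_mem_cone _ _)).symm
  · rw [Homeomorph.mul_apply, onCone_of_notMem _ hx]
    exact spreadFun_of_notMem φ hx

theorem commutator_onCone_spread (hφ : φ ∈ fixingSubgroup ((ℕ → A) ≃ₜ (ℕ → A)) (cone [a])) {b : A}
    (hab : a ≠ b) : ⁅onCone [a] (spread hφ), shift b a⁆ = onCone [a] φ := by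
  have hshift : shift b a ∘ wordAppend [a] = wordAppend ([a] ++ [a]) := by
    funext x
    rw [comp_apply, shift_of_notMem, wordAppend_append]
    rwa [mem_cone_singleton_iff, wordAppend_cons_zero]
  calc ⁅onCone [a] (spread hφ), shift b a⁆
      = onCone [a] (spread hφ) * (shift b a * onCone [a] (spread hφ) * (shift b a)⁻¹)⁻¹ := by
        rw [commutatorElement_def]; group
    _ = onCone [a] (spread hφ * (onCone [a] (spread hφ))⁻¹) := by
        rw [conj_onCone hshift, onCone_append, map_mul, map_inv]
    _ = onCone [a] φ := by
        rw [mul_inv_eq_of_eq_mul (spread_eq_mul_onCone hφ)]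

end Spread

section RationalSubgroup

variable {A : Type*} [TopologicalSpace A] [DiscreteTopology A] [Finite A]
  {R : Subgroup ((ℕ → A) ≃ₜ (ℕ → A))}

theorem exists_mapsTo_compl_cone_singleton (hR : ∀ f, f ∈ R ↔ IsFiniteState f) (a : A)
    (δ : List A) : ∃ g ∈ R, MapsTo g (cone [a])ᶜ (cone δ) := by
  induction δ with
  | nil => exact ⟨1, R.one_mem, fun x _ => ⟨x, wordAppend_nil x⟩⟩
  | cons b δ ih =>
    obtain ⟨g, hg, hgδ⟩ := ih
    rw [hR] at hg
    refine ⟨onCone [b] g * shift a b, R.mul_mem ((hR _).2 (isFiniteState_onCone_iff.2 hg))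
      ((hR _).2 (isFiniteState_shift a b)), fun x hx => ?_⟩
    obtain ⟨y, hy⟩ := hgδ hx
    rw [Homeomorph.mul_apply, shift_of_notMem b hx, onCone_wordAppend, ← hy, ← wordAppend_append]
    exact wordAppend_mem_cone _ y

theorem isExtremelyProximal_of_isFiniteState [Nontrivial A] (hR : ∀ f, f ∈ R ↔ IsFiniteState f) :
    IsExtremelyProximal R (ℕ → A) := by
  rintro V W hV ⟨v, hv⟩ hW ⟨w, hw⟩
  obtain ⟨γ, -, hγ⟩ := exists_cone_subset (hV.mem_nhds hv)
  obtain ⟨δ, -, hδ⟩ := exists_cone_subset (hW.mem_nhds hw)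
  obtain ⟨a, b, hab⟩ := exists_pair_ne A
  obtain ⟨q, hqR, hq⟩ := exists_mapsTo_compl_cone_singleton hR a δ
  obtain ⟨r, hrR, hr⟩ := exists_mapsTo_compl_cone_singleton hR b γ
  refine ⟨⟨q * r⁻¹, R.mul_mem hqR (R.inv_mem hrR)⟩, ?_⟩
  rintro _ ⟨x, hx, rfl⟩
  have hrx : r.symm x ∈ cone [b] := by
    by_contra h
    exact hx (hγ (r.apply_symm_apply x ▸ hr h))
  refine hδ (hq fun h => hab ?_)
  rw [← mem_cone_singleton_iff.1 h, ← mem_cone_singleton_iff.1 hrx]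
  rfl

theorem exists_commutator_eq_of_mem_fixingSubgroup (hR : ∀ f, f ∈ R ↔ IsFiniteState f) {a b : A}
    (hab : a ≠ b) {f : R} (hf : f ∈ fixingSubgroup R (cone [a, a, b])ᶜ) :
    ∃ g ∈ fixingSubgroup R (cone [a])ᶜ, ∃ h ∈ fixingSubgroup R (cone [a])ᶜ, ⁅g, h⁆ = f := by
  obtain ⟨ψ, hψ⟩ : (f : (ℕ → A) ≃ₜ (ℕ → A)) ∈ (onCone [a, a, b]).range := by
    rw [range_onCone]
    exact (mem_fixingSubgroup_iff _).2 ((mem_fixingSubgroup_iff _).1 hf)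
  have hψ_fs : IsFiniteState ψ :=
    isFiniteState_onCone_iff.1 (hψ ▸ (hR f).1 f.2 : IsFiniteState (onCone [a, a, b] ψ))
  have hfix : onCone [b] ψ ∈ fixingSubgroup ((ℕ → A) ≃ₜ (ℕ → A)) (cone [a]) := by
    refine (mem_fixingSubgroup_iff _).2 fun x hx => onCone_of_notMem ψ fun hxb => hab ?_
    rw [← mem_cone_singleton_iff.1 hx, ← mem_cone_singleton_iff.1 hxb]
  have mem_R : ∀ k : (ℕ → A) ≃ₜ (ℕ → A), IsFiniteState k → onCone [a] k ∈ R := fun k hk =>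
    (hR _).2 (isFiniteState_onCone_iff.2 hk)
  have mem_fix : ∀ (k : (ℕ → A) ≃ₜ (ℕ → A)) (hk : IsFiniteState k),
      (⟨onCone [a] k, mem_R k hk⟩ : R) ∈ fixingSubgroup R (cone [a])ᶜ := fun k _ =>
    (mem_fixingSubgroup_iff _).2 fun x hx => onCone_of_notMem k hx
  refine ⟨_, mem_fix (onCone [a] (spread hfix)) (isFiniteState_onCone_iff.2 <|
    IsFiniteState.spreadFun (isFiniteState_onCone_iff.2 hψ_fs)), _,
    mem_fix (shift b a) (isFiniteState_shift b a), Subtype.ext ?_⟩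
  calc ⁅onCone [a] (onCone [a] (spread hfix)), onCone [a] (shift b a)⁆
      = onCone [a] (onCone [a] (onCone [b] ψ)) := by
        rw [← map_commutatorElement, commutator_onCone_spread hfix hab]
    _ = f := by rw [← onCone_append, ← onCone_append]; exact hψ

theorem exists_mem_fixingSubgroup_mul_eq [Nontrivial A] (hR : ∀ f, f ∈ R ↔ IsFiniteState f)
    (f : R) : ∃ V W : Set (ℕ → A), IsOpen V ∧ V.Nonempty ∧ IsOpen W ∧ W.Nonempty ∧
      ∃ g ∈ fixingSubgroup R V, ∃ h ∈ fixingSubgroup R W, g * h = f := by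
  obtain rfl | hf := eq_or_ne f 1
  · exact ⟨univ, univ, isOpen_univ, univ_nonempty, isOpen_univ, univ_nonempty, 1, one_mem _, 1,
      one_mem _, one_mul 1⟩
  obtain ⟨D, hD, hD₀, hfD, hD₁⟩ :=
    exists_isClopen_disjoint_image (f := (f : (ℕ → A) ≃ₜ (ℕ → A))) (by simpa using hf)
  have hk : exchange f.1 hD hfD ∈ R :=
    (hR _).2 (((hR _).1 f.2).exchange ((hR _).1 (f⁻¹).2) hD hfD)
  let k : R := ⟨exchange f.1 hD hfD, hk⟩
  have hk_fix : k ∈ fixingSubgroup R (D ∪ f.1 '' D)ᶜ :=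
    (mem_fixingSubgroup_iff _).2 fun x hx => exchangeFun_of_notMem hx
  have hkf_fix : k * f ∈ fixingSubgroup R D :=
    (mem_fixingSubgroup_iff _).2 fun x hx => exchangeFun_apply hfD hx
  refine ⟨(D ∪ f.1 '' D)ᶜ, D, ?_, hD₁, hD.isOpen, hD₀, k⁻¹, inv_mem hk_fix, k * f, hkf_fix,
    inv_mul_cancel_left k f⟩
  exact (hD.isClosed.union (f.1.isClosed_image.2 hD.isClosed)).isOpen_compl

end RationalSubgroup

end RationalGroup

open RationalGroup in
theorem rational_group_is_simple_general {A : Type*} [TopologicalSpace A] [DiscreteTopology A]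
    [Finite A] [Nontrivial A] (R : Subgroup ((ℕ → A) ≃ₜ (ℕ → A)))
    (hR : ∀ f, f ∈ R ↔ IsRational f) : IsSimpleGroup ↥R := by
  replace hR : ∀ f, f ∈ R ↔ IsFiniteState f := fun f => (hR f).trans isRational_iff_isFiniteState
  obtain ⟨a, b, hab⟩ := exists_pair_ne A
  let x : ℕ → A := fun _ => b
  have hVx : x ∈ (cone [a])ᶜ := mem_cone_singleton_iff.not.2 hab.symm
  have hcomm : ∃ U V : Set (ℕ → A), IsOpen U ∧ U.Nonempty ∧ IsOpen V ∧ V.Nonempty ∧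
      ∀ f ∈ fixingSubgroup R Uᶜ, ∃ g ∈ fixingSubgroup R V, ∃ h ∈ fixingSubgroup R V, ⁅g, h⁆ = f :=
    ⟨cone [a, a, b], (cone [a])ᶜ, (isClopen_cone _).isOpen, ⟨_, wordAppend_mem_cone _ x⟩,
      (isClopen_cone _).compl.isOpen, ⟨x, hVx⟩,
      fun f hf => exists_commutator_eq_of_mem_fixingSubgroup hR hab hf⟩
  exact (isExtremelyProximal_of_isFiniteState hR).isSimpleGroup hcomm
    (exists_mem_fixingSubgroup_mul_eq hR)

/-!
Belk–Hyde–Matucci: the rational group `ℛ`, i.e. the group of rational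
homeomorphisms of the Cantor space `ℕ → Bool` under composition, is simple.
-/
theorem rational_group_is_simple
    (R : Subgroup ((ℕ → Bool) ≃ₜ (ℕ → Bool)))
    (hR : ∀ f, f ∈ R ↔ IsRational f) :
    IsSimpleGroup ↥R :=
  rational_group_is_simple_general R hR
end
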